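/- In G(𝒜): if the m-th symbol of L is a function symbol f of arity n, and a₁,…,aₙ, a' ∈ A are such that w_m(a₁,…,aₙ,b) = a' holds in G(𝒜) (where the aᵢ and a' denote the images of the corresponding generators), then f^𝒜(a₁,…,aₙ) = a' in 𝒜. -/

import Mathlib

/-!
Common setup: an `L`-structure `𝒜` for a language whose symbols are enumerated
(`m`-th symbol, `m ≥ 1`, each a function or relation symbol of arity ≥ 1), and the
presented group `G(𝒜)` of Harrison-Trainor and Ho.
-/

/-- A first-order language with symbols enumerated by `ℕ` (the `m`-th symbol, for `m ≥ 1`,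
is a function symbol if `isFunc m`, and a relation symbol otherwise, of arity `arity m ≥ 1`),
together with an interpretation on a domain `A`: `funcInterp m` interprets the `m`-th symbol
when it is a function symbol, and `relInterp m` when it is a relation symbol. -/
structure IndexedStructure where
  A : Type
  arity : ℕ → ℕ
  arity_pos : ∀ m, 1 ≤ m → 1 ≤ arity m
  isFunc : ℕ → Prop
  funcInterp : ∀ m, (Fin (arity m) → A) → A
  relInterp : ∀ m, (Fin (arity m) → A) → Prop

/-- The generating set of `G(𝒜)`: one generator for each element of the domain `A`,
plus five further generators `b`, `c`, `d`, `f₁`, `f₂`. -/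
inductive GenSym (A : Type) : Type
  | elt : A → GenSym A
  | b : GenSym A
  | c : GenSym A
  | d : GenSym A
  | f1 : GenSym A
  | f2 : GenSym A

/-- `chainProd lo x y = x y^{(lo+1)²} x y^{(lo+2)²} ⋯ x y^{(lo+1000)²}`.
So `u_A = chainProd 0`, `u_b = chainProd 1000`, `u_c = chainProd 2000`,
`u_d = chainProd 3000`, and `v = chainProd 4000`. -/
def chainProd {G : Type*} [Group G] (lo : ℕ) (x y : G) : G :=
  ((List.range 1000).map fun k => x * y ^ ((lo + k + 1) ^ 2)).prod

/-- `wProd m xs y = x₁⋯xₙ y^{100m+1} x₁⋯xₙ y^{100m+2} ⋯ x₁⋯xₙ y^{100m+100}`,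
i.e. the word `w_m(x₁,…,xₙ,y)`. -/
def wProd {G : Type*} [Group G] (m : ℕ) {n : ℕ} (xs : Fin n → G) (y : G) : G :=
  ((List.range 100).map fun k => (List.ofFn xs).prod * y ^ (100 * m + k + 1)).prod

/-- The set of relators of the presentation of `G(𝒜)`. -/
def grpRels (S : IndexedStructure) (p₁ p₂ : ℕ) : Set (FreeGroup (GenSym S.A)) :=
  {FreeGroup.of GenSym.f1 ^ p₁, FreeGroup.of GenSym.f2 ^ p₂,
    chainProd 4000 (FreeGroup.of GenSym.f1) (FreeGroup.of GenSym.f2),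
    chainProd 4000 (FreeGroup.of GenSym.f2) (FreeGroup.of GenSym.f1),
    chainProd 1000 (FreeGroup.of GenSym.b) (FreeGroup.of GenSym.f1),
    chainProd 1000 (FreeGroup.of GenSym.b) (FreeGroup.of GenSym.f2),
    chainProd 2000 (FreeGroup.of GenSym.c) (FreeGroup.of GenSym.f1),
    chainProd 2000 (FreeGroup.of GenSym.c) (FreeGroup.of GenSym.f2),
    chainProd 3000 (FreeGroup.of GenSym.d) (FreeGroup.of GenSym.f1),
    chainProd 3000 (FreeGroup.of GenSym.d) (FreeGroup.of GenSym.f2)}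
  ∪ {r | ∃ a : S.A,
      r = chainProd 0 (FreeGroup.of (GenSym.elt a)) (FreeGroup.of GenSym.c) ∨
      r = chainProd 0 (FreeGroup.of (GenSym.elt a)) (FreeGroup.of GenSym.d)}
  ∪ {r | ∃ m, 1 ≤ m ∧ S.isFunc m ∧ ∃ as : Fin (S.arity m) → S.A,
      r = wProd m (fun i => FreeGroup.of (GenSym.elt (as i))) (FreeGroup.of GenSym.b) *
        (FreeGroup.of (GenSym.elt (S.funcInterp m as)))⁻¹}
  ∪ {r | ∃ m, 1 ≤ m ∧ ¬ S.isFunc m ∧ ∃ as : Fin (S.arity m) → S.A,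
      S.relInterp m as ∧
      r = wProd m (fun i => FreeGroup.of (GenSym.elt (as i))) (FreeGroup.of GenSym.b)}

/-- The group `G(𝒜)`, presented on the generators `GenSym A` with relators `grpRels`. -/
abbrev GA (S : IndexedStructure) (p₁ p₂ : ℕ) : Type :=
  PresentedGroup (grpRels S p₁ p₂)

/-- The image in `G(𝒜)` of a generator. -/
def gen (S : IndexedStructure) (p₁ p₂ : ℕ) (g : GenSym S.A) : GA S p₁ p₂ :=
  PresentedGroup.of g

/-!
The proof is a small cancellation argument. Up to conjugation, every relator of `G(𝒜)` other than
`f₁ ^ p₁` and `f₂ ^ p₂` is a cyclic word made of at least a hundred blocks, each a stem followed by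
a power of one fixed generator, and no two of these powers have the same exponent. A common subword
of two relators of at least a twentieth of a period contains a whole block, whose stem and exponent
identify the relator and the position in it. Hence the bi-infinite repetitions of relators and of
their inverses coincide as soon as they overlap that much.

For such a family, consider the moves that replace a subword covering at least three quarters of a
period by its complement. They can be exchanged with every other shortening move, because subwords
of different relators hardly overlap. A shortening move that replaces less than three quarters of a
period leaves a long piece of the relator in the word, which later moves cannot erase. By induction
on length, a word containing no tenth of a relator is thus the only fully reduced word in its class.
Generators are such words, so they have distinct images in `G(𝒜)`; in particular `a'` and
`f(a₁, …, aₙ)`, both equal to `w_m(a₁, …, aₙ, b)` there, are the same element of `A`.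
-/

namespace SmallCancellation

open FreeGroup

variable {α : Type*}

/-! ### Bi-infinite words -/

/-- The formal inverse of a letter of the free group. -/
def letterInv (l : α × Bool) : α × Bool := (l.1, !l.2)

@[simp]
theorem letterInv_letterInv (l : α × Bool) : letterInv (letterInv l) = l := by
  simp [letterInv]

theorem letterInv_injective : Function.Injective (letterInv : α × Bool → α × Bool) :=
  Function.LeftInverse.injective letterInv_letterInv

theorem mk_letterInv (l : α × Bool) : (mk [letterInv l] : FreeGroup α) = (mk [l])⁻¹ := by
  simp [letterInv, FreeGroup.inv_mk, FreeGroup.invRev]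

theorem ne_letterInv_iff {l l' : α × Bool} : l' ≠ letterInv l ↔ l.1 = l'.1 → l.2 = l'.2 := by
  rw [letterInv, Ne, Prod.ext_iff, not_and, eq_comm]
  cases l.2 <;> cases l'.2 <;> simp

/-- The formal inverse of a bi-infinite word, positioned so that the letter between the points
`k` and `k + 1` lands between `c - k - 1` and `c - k`. -/
def reflect (c : ℤ) (ρ : ℤ → α × Bool) : ℤ → α × Bool := fun k => letterInv (ρ (c - 1 - k))

/-- The finite word of length `n` read along `ρ` from the position `i`. -/
def subword (ρ : ℤ → α × Bool) (i : ℤ) (n : ℕ) : List (α × Bool) :=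
  (List.range n).map fun t : ℕ => ρ (i + t)

@[simp]
theorem length_subword (ρ : ℤ → α × Bool) (i : ℤ) (n : ℕ) : (subword ρ i n).length = n := by
  simp [subword]

theorem subword_succ (ρ : ℤ → α × Bool) (i : ℤ) (n : ℕ) :
    subword ρ i (n + 1) = subword ρ i n ++ [ρ (i + n)] := by
  simp [subword, List.range_succ]

theorem subword_succ' (ρ : ℤ → α × Bool) (i : ℤ) (n : ℕ) :
    subword ρ i (n + 1) = ρ i :: subword ρ (i + 1) n := by
  simp [subword, List.range_succ_eq_map, Function.comp_def, add_assoc, add_comm (1 : ℤ)]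

/-- The vertices, in the Cayley graph of the free group, of the path labelled `ρ` that is at `1`
at time `0`. Truncation of `Int.toNat` makes one of the two factors trivial. -/
def vertex (ρ : ℤ → α × Bool) (k : ℤ) : FreeGroup α :=
  mk (subword ρ 0 k.toNat) * (mk (subword ρ k (-k).toNat))⁻¹

theorem vertex_succ (ρ : ℤ → α × Bool) (k : ℤ) : vertex ρ (k + 1) = vertex ρ k * mk [ρ k] := by
  rcases le_or_gt 0 k with hk | hk
  · rw [vertex, vertex, show (k + 1).toNat = k.toNat + 1 by omega, subword_succ,
      ← FreeGroup.mul_mk, show (-(k + 1)).toNat = 0 by omega, show (-k).toNat = 0 by omega]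
    simp [subword, hk]
  · rw [vertex, vertex, show (-k).toNat = (-(k + 1)).toNat + 1 by omega, subword_succ',
      ← List.singleton_append, ← FreeGroup.mul_mk, show (k + 1).toNat = 0 by omega,
      show k.toNat = 0 by omega]
    group

/-- The element of the free group read along `ρ` from the point `i` to the point `j`, in either
direction. -/
def pathProd (ρ : ℤ → α × Bool) (i j : ℤ) : FreeGroup α := (vertex ρ i)⁻¹ * vertex ρ j

theorem pathProd_mul (ρ : ℤ → α × Bool) (i j k : ℤ) :
    pathProd ρ i j * pathProd ρ j k = pathProd ρ i k := by
  simp only [pathProd]; group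

@[simp]
theorem pathProd_self (ρ : ℤ → α × Bool) (i : ℤ) : pathProd ρ i i = 1 := by
  simp [pathProd]

@[simp]
theorem pathProd_inv (ρ : ℤ → α × Bool) (i j : ℤ) : (pathProd ρ i j)⁻¹ = pathProd ρ j i := by
  simp [pathProd]

theorem pathProd_succ (ρ : ℤ → α × Bool) (i : ℤ) : pathProd ρ i (i + 1) = mk [ρ i] := by
  simp [pathProd, vertex_succ]

theorem pathProd_eq_of_forall_succ {ρ : ℤ → α × Bool} {h : ℤ → FreeGroup α}
    (hh : ∀ k, h (k + 1) = h k * mk [ρ k]) (i j : ℤ) : pathProd ρ i j = (h i)⁻¹ * h j := by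
  have step : Function.Periodic (fun k => h k * (vertex ρ k)⁻¹) 1 := fun k => by
    simp only [hh, vertex_succ]
    group
  have key : ∀ k, h k = h 0 * (vertex ρ 0)⁻¹ * vertex ρ k := fun k => by
    have := step.int_mul k 0
    simp only [zero_add, Int.cast_id, mul_one] at this
    rw [← this, inv_mul_cancel_right]
  rw [key i, key j, pathProd]
  group

theorem pathProd_comp_add (ρ : ℤ → α × Bool) (c i j : ℤ) :
    pathProd (fun k => ρ (k + c)) i j = pathProd ρ (i + c) (j + c) :=
  pathProd_eq_of_forall_succ (h := fun k => vertex ρ (k + c))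
    (fun k => by rw [add_right_comm, vertex_succ]) i j

theorem pathProd_add_mul_period {ρ : ℤ → α × Bool} {p : ℤ} (h : Function.Periodic ρ p)
    (n i j : ℤ) : pathProd ρ (i + n * p) (j + n * p) = pathProd ρ i j := by
  rw [← pathProd_comp_add, show (fun k => ρ (k + n * p)) = ρ from funext (h.int_mul n)]

theorem pathProd_reflect (c : ℤ) (ρ : ℤ → α × Bool) (i j : ℤ) :
    pathProd (reflect c ρ) (c - i) (c - j) = pathProd ρ i j := by
  refine (pathProd_eq_of_forall_succ (h := fun k => vertex (reflect c ρ) (c - k))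
    (fun k => ?_) i j).symm
  have hstep := vertex_succ (reflect c ρ) (c - (k + 1))
  rw [show c - (k + 1) + 1 = c - k by ring, reflect, show c - 1 - (c - (k + 1)) = k by ring,
    mk_letterInv] at hstep
  rw [hstep, inv_mul_cancel_right]

theorem pathProd_add_natCast (ρ : ℤ → α × Bool) (i : ℤ) (n : ℕ) :
    pathProd ρ i (i + n) = mk (subword ρ i n) := by
  induction n with
  | zero => simp [subword, ← FreeGroup.one_eq_mk]
  | succ n ih =>
    rw [subword_succ, ← FreeGroup.mul_mk, ← ih, ← pathProd_succ, pathProd_mul, Nat.cast_succ,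
      add_assoc]

theorem norm_pathProd_le [DecidableEq α] (ρ : ℤ → α × Bool) (i j : ℤ) :
    ((pathProd ρ i j).norm : ℤ) ≤ |j - i| := by
  wlog h : i ≤ j generalizing i j
  · rw [← pathProd_inv, FreeGroup.norm_inv_eq, abs_sub_comm]
    exact this j i (by omega)
  obtain ⟨n, rfl⟩ := Int.le.dest h
  rw [pathProd_add_natCast, add_sub_cancel_left, Nat.abs_cast]
  exact_mod_cast FreeGroup.norm_mk_le.trans_eq (length_subword ρ i n)

/-! ### Finite words at integer positions -/

/-- The letter of a finite word at an integer position; `none` outside `[0, Z.length)`. -/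
def letterAt (Z : List (α × Bool)) (k : ℤ) : Option (α × Bool) :=
  if k < 0 then none else Z[k.toNat]?

theorem letterAt_natCast (Z : List (α × Bool)) (k : ℕ) : letterAt Z k = Z[k]? := by
  simp [letterAt]

theorem letterAt_of_neg (Z : List (α × Bool)) {k : ℤ} (h : k < 0) : letterAt Z k = none :=
  if_pos h

theorem letterAt_of_length_le (Z : List (α × Bool)) {k : ℤ} (h : (Z.length : ℤ) ≤ k) :
    letterAt Z k = none := by
  rw [letterAt, if_neg (by omega), List.getElem?_eq_none (by omega)]

theorem bounds_of_letterAt_eq_some {Z : List (α × Bool)} {k : ℤ} {l : α × Bool}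
    (h : letterAt Z k = some l) : 0 ≤ k ∧ k < Z.length := by
  refine ⟨not_lt.1 fun hk => ?_, not_le.1 fun hk => ?_⟩
  · simp [letterAt_of_neg Z hk] at h
  · simp [letterAt_of_length_le Z hk] at h

theorem letterAt_append_left (A B : List (α × Bool)) {k : ℤ} (h : k < A.length) :
    letterAt (A ++ B) k = letterAt A k := by
  unfold letterAt
  split_ifs
  · rfl
  · rw [List.getElem?_append_left (by omega)]

theorem letterAt_append_right (A B : List (α × Bool)) {k : ℤ} (h : A.length ≤ k) :
    letterAt (A ++ B) k = letterAt B (k - A.length) := by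
  rw [letterAt, letterAt, if_neg (by omega), if_neg (by omega),
    List.getElem?_append_right (by omega), show (k - A.length).toNat = k.toNat - A.length by omega]

theorem letterAt_subword (ρ : ℤ → α × Bool) (i : ℤ) {n : ℕ} {k : ℤ} (h0 : 0 ≤ k) (h1 : k < n) :
    letterAt (subword ρ i n) k = some (ρ (i + k)) := by
  obtain ⟨t, rfl⟩ := Int.eq_ofNat_of_zero_le h0
  have ht : t < n := by exact_mod_cast h1
  simp [letterAt_natCast, subword, ht]

theorem letterAt_take (Z : List (α × Bool)) {n : ℕ} {k : ℤ} (h : k < n) :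
    letterAt (Z.take n) k = letterAt Z k := by
  unfold letterAt
  split_ifs
  · rfl
  · rw [List.getElem?_take_of_lt (by omega)]

theorem letterAt_drop (Z : List (α × Bool)) (n : ℕ) {k : ℤ} (h : 0 ≤ k) :
    letterAt (Z.drop n) k = letterAt Z (k + n) := by
  rw [letterAt, letterAt, if_neg (by omega), if_neg (by omega), List.getElem?_drop,
    show (k + n).toNat = n + k.toNat by omega]

/-- No letter of the partial word `z` is followed by its inverse. -/
def NoCancellation (z : ℤ → Option (α × Bool)) : Prop :=
  ∀ k l l', z k = some l → z (k + 1) = some l' → l' ≠ letterInv l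

theorem isReduced_iff_noCancellation (Z : List (α × Bool)) :
    FreeGroup.IsReduced Z ↔ NoCancellation (letterAt Z) := by
  rw [FreeGroup.IsReduced, List.isChain_iff_getElem]
  constructor
  · intro h k l l' hl hl'
    obtain ⟨t, rfl⟩ := Int.eq_ofNat_of_zero_le (bounds_of_letterAt_eq_some hl).1
    rw [← Nat.cast_succ, letterAt_natCast] at hl'
    rw [letterAt_natCast] at hl
    obtain ⟨_, rfl⟩ := List.getElem?_eq_some_iff.1 hl
    obtain ⟨ht, rfl⟩ := List.getElem?_eq_some_iff.1 hl'
    exact ne_letterInv_iff.2 (h t ht)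
  · intro h i hi
    refine ne_letterInv_iff.1 (h i Z[i] Z[i + 1] ?_ ?_)
    · simp [letterAt_natCast]
    · rw [← Nat.cast_succ, letterAt_natCast]
      simp

/-- The partial word `z` agrees with the bi-infinite word `ρ` on `[a, b)`. -/
def Reads (z : ℤ → Option (α × Bool)) (ρ : ℤ → α × Bool) (a b : ℤ) : Prop :=
  ∀ k, a ≤ k → k < b → z k = some (ρ k)

/-- The element spelled by the letters of `Z` before the position `a`. -/
def prefixProd (Z : List (α × Bool)) (a : ℤ) : FreeGroup α := mk (Z.take a.toNat)

/-- The element spelled by the letters of `Z` from the position `a` on. -/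
def suffixProd (Z : List (α × Bool)) (a : ℤ) : FreeGroup α := mk (Z.drop a.toNat)

theorem prefixProd_mul_suffixProd (Z : List (α × Bool)) (a : ℤ) :
    prefixProd Z a * suffixProd Z a = mk Z := by
  simp [prefixProd, suffixProd]

theorem prefixProd_succ {Z : List (α × Bool)} {k : ℤ} {l : α × Bool} (h : letterAt Z k = some l) :
    prefixProd Z (k + 1) = prefixProd Z k * mk [l] := by
  obtain ⟨t, rfl⟩ := Int.eq_ofNat_of_zero_le (bounds_of_letterAt_eq_some h).1
  rw [letterAt_natCast] at h
  rw [prefixProd, prefixProd, ← Nat.cast_succ, Int.toNat_natCast, Int.toNat_natCast,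
    List.take_add_one, h, ← FreeGroup.mul_mk]
  rfl

theorem prefixProd_mul_pathProd {Z : List (α × Bool)} {ρ : ℤ → α × Bool} {a b : ℤ} (hab : a ≤ b)
    (h : Reads (letterAt Z) ρ a b) : prefixProd Z a * pathProd ρ a b = prefixProd Z b := by
  induction b, hab using Int.leInduction with
  | base => simp
  | succ b hab ih =>
    rw [prefixProd_succ (h b hab (by omega)), ← ih fun k h1 h2 => h k h1 (by omega),
      ← pathProd_succ, mul_assoc, pathProd_mul]

theorem pathProd_mul_suffixProd {Z : List (α × Bool)} {ρ : ℤ → α × Bool} {a b : ℤ} (hab : a ≤ b)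
    (h : Reads (letterAt Z) ρ a b) : pathProd ρ a b * suffixProd Z b = suffixProd Z a :=
  mul_left_cancel (a := prefixProd Z a) <| by
    rw [← mul_assoc, prefixProd_mul_pathProd hab h, prefixProd_mul_suffixProd,
      prefixProd_mul_suffixProd]

section Norm

variable [DecidableEq α]

theorem norm_prefixProd_le (Z : List (α × Bool)) {a : ℤ} (h : 0 ≤ a) :
    ((prefixProd Z a).norm : ℤ) ≤ a := by
  have := FreeGroup.norm_mk_le (L₁ := Z.take a.toNat)
  rw [List.length_take] at this
  unfold prefixProd
  omega

theorem norm_suffixProd_le (Z : List (α × Bool)) {a : ℤ} (h : 0 ≤ a) (h' : a ≤ Z.length) :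
    ((suffixProd Z a).norm : ℤ) ≤ Z.length - a := by
  have := FreeGroup.norm_mk_le (L₁ := Z.drop a.toNat)
  rw [List.length_drop] at this
  unfold suffixProd
  omega

theorem norm_prefixProd_inv_mul_prefixProd_le (Z : List (α × Bool)) {a b : ℤ} (h : 0 ≤ a)
    (h' : a ≤ b) : (((prefixProd Z a)⁻¹ * prefixProd Z b).norm : ℤ) ≤ b - a := by
  have split : prefixProd Z b =
      prefixProd Z a * mk ((Z.drop a.toNat).take (b.toNat - a.toNat)) := by
    rw [prefixProd, prefixProd, FreeGroup.mul_mk, ← List.take_add,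
      Nat.add_sub_cancel' (by omega)]
  have := FreeGroup.norm_mk_le (L₁ := (Z.drop a.toNat).take (b.toNat - a.toNat))
  rw [List.length_take] at this
  rw [split, inv_mul_cancel_left]
  omega

end Norm

/-! ### Inserting a piece of a bi-infinite word -/

theorem reflect_succ_ne_letterInv {ρ : ℤ → α × Bool} (hρ : ∀ k, ρ (k + 1) ≠ letterInv (ρ k))
    (c k : ℤ) : reflect c ρ (k + 1) ≠ letterInv (reflect c ρ k) := by
  have := hρ (c - 1 - (k + 1))
  rw [show c - 1 - (k + 1) + 1 = c - 1 - k by ring] at this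
  rw [reflect, reflect, letterInv_letterInv]
  exact this.symm

theorem isReduced_subword {ρ : ℤ → α × Bool} (hρ : ∀ k, ρ (k + 1) ≠ letterInv (ρ k)) (i : ℤ)
    (n : ℕ) : FreeGroup.IsReduced (subword ρ i n) := by
  rw [FreeGroup.IsReduced, List.isChain_iff_getElem]
  intro t ht
  simpa [subword, add_assoc] using ne_letterInv_iff.1 (hρ (i + t))

theorem isReduced_append_subword_append {A B : List (α × Bool)} {ρ : ℤ → α × Bool} {i : ℤ} {n : ℕ}
    (hn : 0 < n) (hA : FreeGroup.IsReduced A) (hB : FreeGroup.IsReduced B)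
    (hρ : ∀ k, ρ (k + 1) ≠ letterInv (ρ k)) (hl : A.getLast? ≠ some (letterInv (ρ i)))
    (hr : B.head? ≠ some (letterInv (ρ (i + n - 1)))) :
    FreeGroup.IsReduced (A ++ subword ρ i n ++ B) := by
  obtain ⟨m, rfl⟩ := Nat.exists_eq_succ_of_ne_zero hn.ne'
  refine List.isChain_append.2 ⟨List.isChain_append.2 ⟨hA, isReduced_subword hρ i _, ?_⟩, hB, ?_⟩
  · rw [Nat.succ_eq_add_one, subword_succ', List.head?_cons]
    rintro x hx _ ⟨⟩
    refine ne_letterInv_iff.1 fun h => hl ?_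
    rw [h, letterInv_letterInv]
    exact hx
  · rw [Nat.succ_eq_add_one, subword_succ, ← List.append_assoc, List.getLast?_concat]
    rintro _ ⟨⟩ y hy
    refine ne_letterInv_iff.1 fun h => hr ?_
    rw [Nat.cast_succ, show i + ((m : ℤ) + 1) - 1 = i + m by ring, ← h]
    exact hy

theorem letterAt_append_subword_append (A B : List (α × Bool)) (ρ : ℤ → α × Bool) (i : ℤ) (n : ℕ)
    (k : ℤ) : letterAt (A ++ subword ρ i n ++ B) k =
      if k < A.length then letterAt A k
      else if k < A.length + n then some (ρ (i + (k - A.length)))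
      else letterAt B (k - A.length - n) := by
  have hlen : ((A ++ subword ρ i n).length : ℤ) = A.length + n := by simp
  split_ifs with h₁ h₂
  · rw [letterAt_append_left _ _ (by omega), letterAt_append_left _ _ h₁]
  · rw [letterAt_append_left _ _ (by omega), letterAt_append_right _ _ (by omega),
      letterAt_subword _ _ (by omega) (by omega)]
  · rw [letterAt_append_right _ _ (by omega), hlen, sub_add_eq_sub_sub]

theorem letterAt_length_sub_one (Z : List (α × Bool)) :
    letterAt Z (Z.length - 1) = Z.getLast? := by
  rw [List.getLast?_eq_getElem?]
  rcases Z.length.eq_zero_or_pos with h | h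
  · simp [List.eq_nil_of_length_eq_zero h, letterAt]
  · rw [letterAt, if_neg (by omega), show ((Z.length : ℤ) - 1).toNat = Z.length - 1 by omega]

theorem letterAt_zero (Z : List (α × Bool)) : letterAt Z 0 = Z.head? := by
  rw [List.head?_eq_getElem?, ← Nat.cast_zero, letterAt_natCast]

/-- In the Cayley graph of the free group, the geodesic from `1` to `P` meets the path `ρ`, placed
so that its point `i` is at `P`, only at the end point `P`. -/
def LeftTight [DecidableEq α] (ρ : ℤ → α × Bool) (P : FreeGroup α) (i : ℤ) : Prop :=
  P.toWord.getLast? ≠ some (letterInv (ρ i)) ∧ P.toWord.getLast? ≠ some (ρ (i - 1))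

/-- The mirror image of `LeftTight`, for a geodesic spelling `Q` that starts at the point `j` of
the path `ρ`. -/
def RightTight [DecidableEq α] (ρ : ℤ → α × Bool) (Q : FreeGroup α) (j : ℤ) : Prop :=
  Q.toWord.head? ≠ some (letterInv (ρ (j - 1))) ∧ Q.toWord.head? ≠ some (ρ j)

section Tight

variable [DecidableEq α] {ρ : ℤ → α × Bool} {P Q : FreeGroup α} {i j : ℤ}

theorem LeftTight.reflect (h : LeftTight ρ P i) (c : ℤ) : LeftTight (reflect c ρ) P (c - i) := by
  rw [LeftTight, SmallCancellation.reflect, SmallCancellation.reflect, letterInv_letterInv,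
    show c - 1 - (c - i) = i - 1 by ring, show c - 1 - (c - i - 1) = i by ring]
  exact h.symm

theorem RightTight.reflect (h : RightTight ρ Q j) (c : ℤ) : RightTight (reflect c ρ) Q (c - j) := by
  rw [RightTight, SmallCancellation.reflect, SmallCancellation.reflect, letterInv_letterInv,
    show c - 1 - (c - j - 1) = j by ring, show c - 1 - (c - j) = j - 1 by ring]
  exact h.symm

theorem RightTight.add_mul_period {p : ℤ} (h : RightTight ρ Q j) (hρ : Function.Periodic ρ p)
    (k : ℤ) : RightTight ρ Q (j + k * p) := by
  have hk : Function.Periodic ρ (k * p) := hρ.int_mul k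
  rw [RightTight, add_sub_right_comm, hk, hk]
  exact h

theorem exists_leftTight (ρ : ℤ → α × Bool) (P : FreeGroup α) (i : ℤ) :
    ∃ P' i', P' * pathProd ρ i' i = P ∧ LeftTight ρ P' i' := by
  induction hn : P.norm using Nat.strong_induction_on generalizing P i with
  | _ n ih =>
  by_cases hP : LeftTight ρ P i
  · exact ⟨P, i, by simp, hP⟩
  obtain ⟨i₁, l, hl, hi₁⟩ : ∃ i₁ l, P.toWord.getLast? = some l ∧ mk [l] = pathProd ρ i₁ i := by
    rw [LeftTight, not_and_or, not_not, not_not] at hP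
    rcases hP with h | h
    · exact ⟨i + 1, _, h, by rw [mk_letterInv, ← pathProd_succ, pathProd_inv]⟩
    · exact ⟨i - 1, _, h, by rw [← pathProd_succ, sub_add_cancel]⟩
  obtain ⟨L, hL⟩ := List.getLast?_eq_some_iff.1 hl
  have hPL : P = mk L * pathProd ρ i₁ i := by
    rw [← hi₁, FreeGroup.mul_mk, ← hL, FreeGroup.mk_toWord]
  have hlt : (mk L).norm < n := by
    rw [← hn, FreeGroup.norm, FreeGroup.norm, hL, List.length_append, List.length_singleton,
      Nat.lt_succ_iff]
    exact FreeGroup.norm_mk_le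
  obtain ⟨P', i', hP', htight⟩ := ih _ hlt (mk L) i₁ rfl
  exact ⟨P', i', by rw [hPL, ← hP', mul_assoc, pathProd_mul], htight⟩

theorem exists_rightTight (ρ : ℤ → α × Bool) (Q : FreeGroup α) (j : ℤ) :
    ∃ Q' j', pathProd ρ j j' * Q' = Q ∧ RightTight ρ Q' j' := by
  induction hn : Q.norm using Nat.strong_induction_on generalizing Q j with
  | _ n ih =>
  by_cases hQ : RightTight ρ Q j
  · exact ⟨Q, j, by simp, hQ⟩
  obtain ⟨j₁, l, hl, hj₁⟩ : ∃ j₁ l, Q.toWord.head? = some l ∧ mk [l] = pathProd ρ j j₁ := by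
    rw [RightTight, not_and_or, not_not, not_not] at hQ
    rcases hQ with h | h
    · exact ⟨j - 1, _, h, by rw [mk_letterInv, ← pathProd_succ, pathProd_inv, sub_add_cancel]⟩
    · exact ⟨j + 1, _, h, by rw [← pathProd_succ]⟩
  obtain ⟨L, hL⟩ := List.head?_eq_some_iff.1 hl
  have hQL : Q = pathProd ρ j j₁ * mk L := by
    rw [← hj₁, FreeGroup.mul_mk, List.singleton_append, ← hL, FreeGroup.mk_toWord]
  have hlt : (mk L).norm < n := by
    rw [← hn, FreeGroup.norm, FreeGroup.norm, hL, List.length_cons, Nat.lt_succ_iff]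
    exact FreeGroup.norm_mk_le
  obtain ⟨Q', j', hQ', htight⟩ := ih _ hlt (mk L) j₁ rfl
  exact ⟨Q', j', by rw [hQL, ← hQ', ← mul_assoc, pathProd_mul], htight⟩

theorem toWord_mul_pathProd_mul {n : ℕ} (hn : 0 < n) (hρ : ∀ k, ρ (k + 1) ≠ letterInv (ρ k))
    (hP : LeftTight ρ P i) (hQ : RightTight ρ Q (i + n)) :
    (P * pathProd ρ i (i + n) * Q).toWord = P.toWord ++ subword ρ i n ++ Q.toWord := by
  rw [pathProd_add_natCast, ← P.mk_toWord, ← Q.mk_toWord, FreeGroup.mul_mk, FreeGroup.mul_mk,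
    FreeGroup.toWord_mk, P.mk_toWord, Q.mk_toWord]
  exact (isReduced_append_subword_append hn FreeGroup.isReduced_toWord FreeGroup.isReduced_toWord
    hρ hP.1 hQ.1).reduce_eq

theorem norm_mul_pathProd_mul (hij : i ≠ j) (hρ : ∀ k, ρ (k + 1) ≠ letterInv (ρ k))
    (hP : LeftTight ρ P i) (hQ : RightTight ρ Q j) :
    ((P * pathProd ρ i j * Q).norm : ℤ) = P.norm + |j - i| + Q.norm := by
  wlog h : i < j generalizing ρ i j
  · have := this (i := 0 - i) (j := 0 - j) (by omega) (reflect_succ_ne_letterInv hρ 0)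
      (hP.reflect 0) (hQ.reflect 0) (by omega)
    rwa [pathProd_reflect, show (0 : ℤ) - j - (0 - i) = i - j by ring, abs_sub_comm] at this
  obtain ⟨n, rfl⟩ := Int.le.dest h.le
  rw [FreeGroup.norm, toWord_mul_pathProd_mul (by omega) hρ hP hQ]
  simp [FreeGroup.norm, add_assoc]

end Tight

/-! ### Readings -/

section Reads

variable {z : ℤ → Option (α × Bool)} {ρ : ℤ → α × Bool} {a b : ℤ}

theorem Reads.mono {a' b' : ℤ} (h : Reads z ρ a b) (ha : a ≤ a') (hb : b' ≤ b) :
    Reads z ρ a' b' :=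
  fun k h₁ h₂ => h k (ha.trans h₁) (h₂.trans_le hb)

theorem Reads.union {a' b' : ℤ} (h : Reads z ρ a b) (h' : Reads z ρ a' b')
    (hab : max a a' ≤ min b b') : Reads z ρ (min a a') (max b b') := by
  intro k h₁ h₂
  by_cases hk : a ≤ k ∧ k < b
  · exact h k hk.1 hk.2
  · exact h' k (by omega) (by omega)

theorem Reads.extend_right (h : Reads z ρ a b) (hb : z b = some (ρ b)) : Reads z ρ a (b + 1) := by
  intro k h₁ h₂
  rcases (Int.le_of_lt_add_one h₂).eq_or_lt with rfl | h₃
  · exact hb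
  · exact h k h₁ h₃

theorem Reads.extend_left (h : Reads z ρ a b) (ha : z (a - 1) = some (ρ (a - 1))) :
    Reads z ρ (a - 1) b := by
  intro k h₁ h₂
  rcases h₁.eq_or_lt with rfl | h₃
  · exact ha
  · exact h k (by omega) h₂

theorem Reads.bounds {Z : List (α × Bool)} (h : Reads (letterAt Z) ρ a b) (hab : a < b) :
    0 ≤ a ∧ b ≤ Z.length := by
  have h₁ := bounds_of_letterAt_eq_some (h a le_rfl hab)
  have h₂ := bounds_of_letterAt_eq_some (h (b - 1) (by omega) (by omega))
  omega

end Reads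

/-- The nonempty interval `[a, b)` on which `z` agrees with `ρ` cannot be extended on either
side. -/
structure MaximalReading (z : ℤ → Option (α × Bool)) (ρ : ℤ → α × Bool) (a b : ℤ) : Prop where
  lt : a < b
  reads : Reads z ρ a b
  left_ne : z (a - 1) ≠ some (ρ (a - 1))
  right_ne : z b ≠ some (ρ b)

theorem exists_maximalReading {Z : List (α × Bool)} {ρ : ℤ → α × Bool} {a b : ℤ} (hab : a < b)
    (h : Reads (letterAt Z) ρ a b) :
    ∃ a' b', a' ≤ a ∧ b ≤ b' ∧ MaximalReading (letterAt Z) ρ a' b' := by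
  obtain ⟨b', ⟨hb', hr⟩, hmax⟩ := Int.exists_greatest_of_bdd
    (P := fun t => b ≤ t ∧ Reads (letterAt Z) ρ a t)
    ⟨Z.length, fun t ht => (ht.2.bounds (by omega)).2⟩ ⟨b, le_rfl, h⟩
  obtain ⟨a', ⟨ha', hr'⟩, hmin⟩ := Int.exists_least_of_bdd
    (P := fun t => t ≤ a ∧ Reads (letterAt Z) ρ t b')
    ⟨0, fun t ht => (ht.2.bounds (by omega)).1⟩ ⟨a, le_rfl, hr⟩
  refine ⟨a', b', ha', hb', by omega, hr', fun hl => ?_, fun hl => ?_⟩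
  · have := hmin (a' - 1) ⟨by omega, hr'.extend_left hl⟩
    omega
  · have := hmax (b' + 1) ⟨by omega, hr.extend_right hl⟩
    omega

/-- The element obtained from the word `Z` by replacing its letters on `[a, b)` by the path `ρ`
from `a` to `c`. -/
def substPath (Z : List (α × Bool)) (ρ : ℤ → α × Bool) (a b c : ℤ) : FreeGroup α :=
  prefixProd Z a * pathProd ρ a c * suffixProd Z b

theorem norm_substPath_le [DecidableEq α] (Z : List (α × Bool)) (ρ : ℤ → α × Bool) {a b : ℤ} (c : ℤ)
    (ha : 0 ≤ a) (hb : 0 ≤ b) (hb' : b ≤ Z.length) :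
    ((substPath Z ρ a b c).norm : ℤ) ≤ a + |c - a| + (Z.length - b) := by
  have h₁ := FreeGroup.norm_mul_le (prefixProd Z a * pathProd ρ a c) (suffixProd Z b)
  have h₂ := FreeGroup.norm_mul_le (prefixProd Z a) (pathProd ρ a c)
  have h₃ := norm_prefixProd_le Z ha
  have h₄ := norm_pathProd_le ρ a c
  have h₅ := norm_suffixProd_le Z hb hb'
  unfold substPath
  omega

theorem substPath_extend {Z : List (α × Bool)} {ρ : ℤ → α × Bool} {p a₀ b₀ a b : ℤ}
    (hρ : Function.Periodic ρ p) (hr : Reads (letterAt Z) ρ a₀ b₀) (ha : a₀ ≤ a) (ha' : a ≤ b₀)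
    (hb : a₀ ≤ b) (hb' : b ≤ b₀) (k : ℤ) :
    substPath Z ρ a b (b + k * p) = substPath Z ρ a₀ b₀ (b₀ + k * p) := by
  rw [substPath, substPath, ← prefixProd_mul_pathProd ha (hr.mono le_rfl ha'),
    ← pathProd_mul_suffixProd hb' (hr.mono hb le_rfl), ← pathProd_add_mul_period hρ k b b₀,
    ← mul_assoc, mul_assoc _ (pathProd ρ a₀ a), pathProd_mul, mul_assoc _ (pathProd ρ a₀ _),
    pathProd_mul]

section TightSplice

variable [DecidableEq α] {ρ : ℤ → α × Bool} {P Q : FreeGroup α} {i j : ℤ}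

theorem maximalReading_of_tight (hij : i < j) (hρ : ∀ k, ρ (k + 1) ≠ letterInv (ρ k))
    (hP : LeftTight ρ P i) (hQ : RightTight ρ Q j) :
    MaximalReading (letterAt (P * pathProd ρ i j * Q).toWord) (fun t => ρ (t + (i - P.norm)))
      P.norm (P.norm + (j - i)) := by
  obtain ⟨n, rfl⟩ := Int.le.dest hij.le
  rw [toWord_mul_pathProd_mul (by omega) hρ hP hQ, add_sub_cancel_left, FreeGroup.norm]
  refine ⟨by omega, fun t ht₁ ht₂ => ?_, ?_, ?_⟩
  · rw [letterAt_append_subword_append, if_neg (by omega), if_pos (by omega)]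
    ring_nf
  · rw [letterAt_append_subword_append, if_pos (by omega), letterAt_length_sub_one]
    rw [show (P.toWord.length : ℤ) - 1 + (i - P.toWord.length) = i - 1 by ring]
    exact hP.2
  · rw [letterAt_append_subword_append, if_neg (by omega), if_neg (by omega),
      show (P.toWord.length : ℤ) + n - P.toWord.length - n = 0 by ring, letterAt_zero]
    rw [show (P.toWord.length : ℤ) + n + (i - P.toWord.length) = i + n by ring]
    exact hQ.2

theorem substPath_of_tight (hij : i < j) (hρ : ∀ k, ρ (k + 1) ≠ letterInv (ρ k))
    (hP : LeftTight ρ P i) (hQ : RightTight ρ Q j) (c : ℤ) :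
    substPath (P * pathProd ρ i j * Q).toWord (fun t => ρ (t + (i - P.norm)))
      P.norm (P.norm + (j - i)) (P.norm + (c - i)) = P * pathProd ρ i c * Q := by
  obtain ⟨n, rfl⟩ := Int.le.dest hij.le
  have hlen : (P.norm + (i + (n : ℤ) - i)).toNat = (P.toWord ++ subword ρ i n).length := by
    rw [List.length_append, length_subword, FreeGroup.norm]
    omega
  rw [substPath, prefixProd, suffixProd, hlen, toWord_mul_pathProd_mul (by omega) hρ hP hQ,
    List.drop_left, Int.toNat_natCast, FreeGroup.norm, List.append_assoc, List.take_left,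
    P.mk_toWord, Q.mk_toWord, pathProd_comp_add, add_sub_cancel,
    show (P.toWord.length : ℤ) + (c - i) + (i - P.toWord.length) = c by ring]

end TightSplice

/-! ### Small cancellation families -/

/-- A family of periodic bi-infinite words, closed under shifts and formal inversion, in which two
words sharing a piece of at least a twentieth of a period coincide. The relation `Ω ρ π` says that
`ρ` belongs to the family with period `π`; the words `ρ` are obtained from cyclically reduced
relators by infinite repetition. -/
structure IsSmallCancellation (Ω : (ℤ → α × Bool) → ℤ → Prop) : Prop where
  shift : ∀ {ρ π}, Ω ρ π → ∀ c, Ω (fun k => ρ (k + c)) π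
  reflect_zero : ∀ {ρ π}, Ω ρ π → Ω (reflect 0 ρ) π
  periodic : ∀ {ρ π}, Ω ρ π → Function.Periodic ρ π
  succ_ne_letterInv : ∀ {ρ π}, Ω ρ π → ∀ k, ρ (k + 1) ≠ letterInv (ρ k)
  hundred_le : ∀ {ρ π}, Ω ρ π → 100 ≤ π
  eq_of_overlap : ∀ {ρ π ρ' π' i j}, Ω ρ π → Ω ρ' π' → (∀ k, i ≤ k → k < j → ρ k = ρ' k) →
    π ≤ 20 * (j - i) → ρ = ρ' ∧ π = π'

section IsSmallCancellation

variable {Ω : (ℤ → α × Bool) → ℤ → Prop} {ρ ρ' : ℤ → α × Bool} {π π' : ℤ}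

theorem IsSmallCancellation.reflect (hΩ : IsSmallCancellation Ω) (hρ : Ω ρ π) (c : ℤ) :
    Ω (reflect c ρ) π := by
  convert hΩ.shift (hΩ.reflect_zero hρ) (-c) using 1
  funext k
  simp only [SmallCancellation.reflect]
  congr 2
  ring

theorem IsSmallCancellation.eq_of_reads (hΩ : IsSmallCancellation Ω) (hρ : Ω ρ π) (hρ' : Ω ρ' π')
    {z : ℤ → Option (α × Bool)} {a b a' b' : ℤ} (h : Reads z ρ a b) (h' : Reads z ρ' a' b')
    (hov : π ≤ 20 * (min b b' - max a a') ∨ π' ≤ 20 * (min b b' - max a a')) :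
    ρ = ρ' ∧ π = π' := by
  have agree (k : ℤ) (h₁ : max a a' ≤ k) (h₂ : k < min b b') : ρ k = ρ' k :=
    Option.some.inj ((h k (by omega) (by omega)).symm.trans (h' k (by omega) (by omega)))
  rcases hov with hov | hov
  · exact hΩ.eq_of_overlap hρ hρ' agree hov
  · exact (hΩ.eq_of_overlap hρ' hρ (fun k h₁ h₂ => (agree k h₁ h₂).symm) hov).imp Eq.symm Eq.symm

/-- `y` and `y'` differ by the insertion of a power of a relator from the family: along `ρ`, the
path from `i` to `j` is exchanged for one ending a multiple of the period later. -/
def RelatorMove (Ω : (ℤ → α × Bool) → ℤ → Prop) (y y' : FreeGroup α) : Prop :=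
  ∃ P Q ρ π i j k, Ω ρ π ∧ y = P * pathProd ρ i j * Q ∧ y' = P * pathProd ρ i (j + k * π) * Q

theorem RelatorMove.symm {y y' : FreeGroup α} (h : RelatorMove Ω y y') : RelatorMove Ω y' y := by
  obtain ⟨P, Q, ρ, π, i, j, k, hρ, h₁, h₂⟩ := h
  exact ⟨P, Q, ρ, π, i, j + k * π, -k, hρ, h₂, by rw [h₁]; congr 3; ring⟩

theorem relatorMove_mul_pathProd_mul (hρ : Ω ρ π) (P Q : FreeGroup α) (i j k k' : ℤ) :
    RelatorMove Ω (P * pathProd ρ i (j + k * π) * Q) (P * pathProd ρ i (j + k' * π) * Q) :=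
  ⟨P, Q, ρ, π, i, j + k * π, k' - k, hρ, rfl, by congr 3; ring⟩

theorem relatorMove_substPath_of_overlap (hΩ : IsSmallCancellation Ω) (hρ : Ω ρ π)
    {Z : List (α × Bool)} {a b a' b' : ℤ} (k k' : ℤ) (hr : Reads (letterAt Z) ρ a b)
    (hr' : Reads (letterAt Z) ρ a' b') (hab : a < b) (hab' : a' < b') (hov : max a a' ≤ min b b') :
    RelatorMove Ω (substPath Z ρ a b (b + k * π)) (substPath Z ρ a' b' (b' + k' * π)) := by
  have hu := hr.union hr' hov
  rw [substPath_extend (a := a) (b := b) (hΩ.periodic hρ) hu (by omega) (by omega) (by omega)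
      (by omega) k,
    substPath_extend (a := a') (b := b') (hΩ.periodic hρ) hu (by omega) (by omega) (by omega)
      (by omega) k', substPath, substPath]
  exact relatorMove_mul_pathProd_mul hρ _ _ _ _ _ _

end IsSmallCancellation

theorem le_two_mul_of_abs_add_mul_le {n k p : ℤ} (hk : k ≠ 0) (h : |n + k * p| ≤ n) :
    p ≤ 2 * n := by
  have h₁ : |p| ≤ |k * p| := by
    rw [abs_mul]
    exact le_mul_of_one_le_left (abs_nonneg p) (Int.one_le_abs hk)
  have h₂ := abs_sub (n + k * p) n
  rw [add_sub_cancel_left] at h₂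
  have h₃ := le_abs_self p
  have h₄ : |n| = n := abs_of_nonneg ((abs_nonneg _).trans h)
  omega

section NormalForm

variable [DecidableEq α] {Ω : (ℤ → α × Bool) → ℤ → Prop} {y y' : FreeGroup α}

theorem RelatorMove.exists_tight (hΩ : IsSmallCancellation Ω) (h : RelatorMove Ω y y') :
    ∃ P Q ρ π i j k, Ω ρ π ∧ i ≤ j ∧ LeftTight ρ P i ∧ RightTight ρ Q j ∧
      y = P * pathProd ρ i j * Q ∧ y' = P * pathProd ρ i (j + k * π) * Q := by
  obtain ⟨P₀, Q₀, ρ, π, i₀, j₀, k, hρ, rfl, rfl⟩ := h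
  obtain ⟨P, i, rfl, hP⟩ := exists_leftTight ρ P₀ i₀
  obtain ⟨Q, j, rfl, hQ⟩ := exists_rightTight ρ Q₀ j₀
  have expand (k : ℤ) : P * pathProd ρ i i₀ * pathProd ρ i₀ (j₀ + k * π) * (pathProd ρ j₀ j * Q) =
      P * pathProd ρ i (j + k * π) * Q := by
    rw [← pathProd_add_mul_period (hΩ.periodic hρ) k j₀ j, mul_assoc P, pathProd_mul, ← mul_assoc,
      mul_assoc P, pathProd_mul]
  have expand₀ := expand 0
  rw [zero_mul, add_zero, add_zero] at expand₀
  rcases le_total i j with hij | hij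
  · exact ⟨P, Q, ρ, π, i, j, k, hρ, hij, hP, hQ, expand₀, expand k⟩
  · refine ⟨P, Q, reflect 0 ρ, π, 0 - i, 0 - j, -k, hΩ.reflect_zero hρ, by omega, hP.reflect 0,
      hQ.reflect 0, ?_, ?_⟩
    · rw [expand₀, pathProd_reflect]
    · rw [expand, show 0 - j + -k * π = 0 - (j + k * π) by ring, pathProd_reflect]

theorem RelatorMove.exists_maximalReading (hΩ : IsSmallCancellation Ω) (h : RelatorMove Ω y y')
    (hne : y ≠ y') (hle : y'.norm ≤ y.norm) :
    ∃ ρ π a b k, Ω ρ π ∧ MaximalReading (letterAt y.toWord) ρ a b ∧ k ≠ 0 ∧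
      |b - a + k * π| ≤ b - a ∧ y' = substPath y.toWord ρ a b (b + k * π) := by
  obtain ⟨P, Q, ρ, π, i, j, k, hρ, hij, hP, hQ, rfl, rfl⟩ := h.exists_tight hΩ
  have hred := hΩ.succ_ne_letterInv hρ
  have hk : k ≠ 0 := by
    rintro rfl
    simp at hne
  have hkπ : k * π ≠ 0 := mul_ne_zero hk (by have := hΩ.hundred_le hρ; omega)
  have norm_eq (h : i ≠ j + k * π) :
      ((P * pathProd ρ i (j + k * π) * Q).norm : ℤ) = P.norm + |j + k * π - i| + Q.norm :=
    norm_mul_pathProd_mul h hred hP (hQ.add_mul_period (hΩ.periodic hρ) k)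
  have hlt : i < j := by
    refine hij.lt_of_ne ?_
    rintro rfl
    have h₁ := norm_eq (by omega)
    have h₂ := FreeGroup.norm_mul_le P Q
    rw [pathProd_self, mul_one] at hle
    have := abs_pos.2 hkπ
    rw [add_sub_cancel_left] at h₁
    omega
  refine ⟨_, π, _, _, k, hΩ.shift hρ _, maximalReading_of_tight hlt hred hP hQ, hk, ?_, ?_⟩
  · rw [add_sub_cancel_left]
    by_cases hzero : i = j + k * π
    · rw [show j - i + k * π = 0 by omega, abs_zero]
      omega
    · have h₁ := norm_eq hzero
      have h₂ := norm_mul_pathProd_mul hlt.ne hred hP hQ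
      rw [abs_of_pos (by omega)] at h₂
      rw [show j + k * π - i = j - i + k * π by ring] at h₁
      omega
  · rw [← substPath_of_tight hlt hred hP hQ (j + k * π)]
    congr 1
    ring

end NormalForm

/-! ### Strong reductions -/

/-- One step of the reduction procedure: a maximal reading of at least three quarters of a period
of `ρ` is replaced by its complement in the period. -/
def StrongReduction [DecidableEq α] (Ω : (ℤ → α × Bool) → ℤ → Prop) (y z : FreeGroup α) : Prop :=
  ∃ ρ π a b, Ω ρ π ∧ MaximalReading (letterAt y.toWord) ρ a b ∧ 3 * π ≤ 4 * (b - a) ∧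
    z = substPath y.toWord ρ a b (b - π)

/-- No reading in `z` covers three quarters of a period. -/
def StronglyReduced (Ω : (ℤ → α × Bool) → ℤ → Prop) (z : ℤ → Option (α × Bool)) : Prop :=
  ∀ ρ π a b, Ω ρ π → Reads z ρ a b → 4 * (b - a) < 3 * π

section StrongReduction

variable [DecidableEq α] {Ω : (ℤ → α × Bool) → ℤ → Prop} {y y' z : FreeGroup α}

theorem StrongReduction.norm_lt (hΩ : IsSmallCancellation Ω) (h : StrongReduction Ω y z) :
    z.norm < y.norm := by
  obtain ⟨ρ, π, a, b, hρ, hr, hlong, rfl⟩ := h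
  have hπ := hΩ.hundred_le hρ
  obtain ⟨ha, hb⟩ := hr.reads.bounds hr.lt
  have hnorm := norm_substPath_le y.toWord ρ (b - π) ha (by omega) hb
  have habs : |b - π - a| < b - a := abs_lt.2 ⟨by omega, by omega⟩
  unfold FreeGroup.norm at *
  omega

theorem exists_strongReduction (hΩ : IsSmallCancellation Ω)
    (h : ¬ StronglyReduced Ω (letterAt y.toWord)) : ∃ z, StrongReduction Ω y z := by
  simp only [StronglyReduced, not_forall, not_lt] at h
  obtain ⟨ρ, π, a, b, hρ, hr, hlong⟩ := h
  have hπ := hΩ.hundred_le hρ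
  obtain ⟨a', b', ha, hb, hmax⟩ := exists_maximalReading (by omega) hr
  exact ⟨_, ρ, π, a', b', hρ, hmax, by omega, rfl⟩

section Substitutions

variable {Z : List (α × Bool)} {ρ ρ' : ℤ → α × Bool} {π π' a b a' b' : ℤ}

theorem exists_relatorMove_of_disjoint (hρ : Ω ρ π) (hρ' : Ω ρ' π') (k k' : ℤ) (hab : a < b)
    (hba : b ≤ a') (hab' : a' < b') (hr : Reads (letterAt Z) ρ a b)
    (hr' : Reads (letterAt Z) ρ' a' b') :
    ∃ w, RelatorMove Ω (substPath Z ρ a b (b + k * π)) w ∧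
      RelatorMove Ω w (substPath Z ρ' a' b' (b' + k' * π')) ∧
      (w.norm : ℤ) ≤ a + |b - a + k * π| + (a' - b) + |b' - a' + k' * π'| + (Z.length - b') := by
  obtain ⟨ha, -⟩ := hr.bounds hab
  obtain ⟨-, hb'⟩ := hr'.bounds hab'
  set M := (prefixProd Z b)⁻¹ * prefixProd Z a' with hM
  have suffix_eq : suffixProd Z b = M * pathProd ρ' a' b' * suffixProd Z b' := by
    rw [mul_assoc, pathProd_mul_suffixProd hab'.le hr', hM, mul_assoc, prefixProd_mul_suffixProd,
      ← prefixProd_mul_suffixProd Z b, inv_mul_cancel_left]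
  have prefix_eq : prefixProd Z a' = prefixProd Z a * pathProd ρ a b * M := by
    rw [prefixProd_mul_pathProd hab.le hr, hM, mul_inv_cancel_left]
  refine ⟨prefixProd Z a * pathProd ρ a (b + k * π) * M * pathProd ρ' a' (b' + k' * π') *
    suffixProd Z b', ?_, ?_, ?_⟩
  · have := relatorMove_mul_pathProd_mul hρ' (prefixProd Z a * pathProd ρ a (b + k * π) * M)
      (suffixProd Z b') a' b' 0 k'
    simpa [substPath, suffix_eq, mul_assoc] using this
  · have := relatorMove_mul_pathProd_mul hρ (prefixProd Z a)
      (M * pathProd ρ' a' (b' + k' * π') * suffixProd Z b') a b k 0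
    simpa [substPath, prefix_eq, mul_assoc] using this
  · set E := pathProd ρ a (b + k * π)
    set E' := pathProd ρ' a' (b' + k' * π')
    have h₁ := FreeGroup.norm_mul_le (prefixProd Z a * E * M * E') (suffixProd Z b')
    have h₂ := FreeGroup.norm_mul_le (prefixProd Z a * E * M) E'
    have h₃ := FreeGroup.norm_mul_le (prefixProd Z a * E) M
    have h₄ := FreeGroup.norm_mul_le (prefixProd Z a) E
    have h₅ := norm_prefixProd_le Z ha
    have h₆ : (E.norm : ℤ) ≤ |b - a + k * π| :=
      (norm_pathProd_le ρ a _).trans_eq (by rw [sub_add_eq_add_sub])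
    have h₇ : (M.norm : ℤ) ≤ a' - b := norm_prefixProd_inv_mul_prefixProd_le Z (by omega) hba
    have h₈ : (E'.norm : ℤ) ≤ |b' - a' + k' * π'| :=
      (norm_pathProd_le ρ' a' _).trans_eq (by rw [sub_add_eq_add_sub])
    have h₉ := norm_suffixProd_le Z (by omega) hb'
    omega

/-- The overlap `[a', b)` of the two readings is moved out of the first of them, at the cost of at
most twice its length. -/
theorem exists_relatorMove_of_gain (hΩ : IsSmallCancellation Ω) (hρ : Ω ρ π) (hρ' : Ω ρ' π')
    (k k' : ℤ) (hr : Reads (letterAt Z) ρ a b) (hr' : Reads (letterAt Z) ρ' a' b') (hab : a < b)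
    (haa : a < a') (hab' : a' < b')
    (hgain : 0 < (b - a - |b - a + k * π|) + (b' - a' - |b' - a' + k' * π'|))
    (hov : 2 * (b - a') < (b - a - |b - a + k * π|) + (b' - a' - |b' - a' + k' * π'|)) :
    ∃ w, RelatorMove Ω (substPath Z ρ a b (b + k * π)) w ∧
      RelatorMove Ω w (substPath Z ρ' a' b' (b' + k' * π')) ∧ w.norm < Z.length := by
  obtain ⟨w, h₁, h₂, h₃⟩ := exists_relatorMove_of_disjoint (Ω := Ω) (b := min b a') hρ hρ' k k'
    (by omega) (by omega) hab' (hr.mono le_rfl (by omega)) hr'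
  refine ⟨w, ?_, h₂, ?_⟩
  · rwa [substPath_extend (hΩ.periodic hρ) hr le_rfl hab.le (by omega) (by omega) k] at h₁
  · have hcut := abs_sub_abs_le_abs_sub (min b a' - a + k * π) (b - a + k * π)
    rw [show min b a' - a + k * π - (b - a + k * π) = -(b - min b a') by ring, abs_neg,
      abs_of_nonneg (show 0 ≤ b - min b a' by omega)] at hcut
    omega

end Substitutions

/-- Local confluence of strong reductions with arbitrary shortening moves. -/
theorem StrongReduction.relatorMove_or_exists (hΩ : IsSmallCancellation Ω)
    (hs : StrongReduction Ω y z) (hm : RelatorMove Ω y y') (hne : y ≠ y')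
    (hle : y'.norm ≤ y.norm) :
    RelatorMove Ω y' z ∨ ∃ w, RelatorMove Ω y' w ∧ RelatorMove Ω w z ∧ w.norm < y.norm := by
  obtain ⟨ρ, π, a, b, k, hρ, hr, hk, hgain, rfl⟩ := hm.exists_maximalReading hΩ hne hle
  obtain ⟨ρ', π', a', b', hρ', hr', hlong, rfl⟩ := hs
  have hπ := hΩ.hundred_le hρ
  have hπ' := hΩ.hundred_le hρ'
  have hhalf := le_two_mul_of_abs_add_mul_le hk hgain
  have hgain' : 2 * |b' - a' + -1 * π'| ≤ 2 * (b' - a') - π' := by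
    rcases abs_cases (b' - a' + -1 * π') with h | h <;> omega
  rw [show b' - π' = b' + -1 * π' by ring]
  by_cases hov : π ≤ 20 * (min b b' - max a a') ∨ π' ≤ 20 * (min b b' - max a a')
  · obtain ⟨rfl, rfl⟩ := hΩ.eq_of_reads hρ hρ' hr.reads hr'.reads hov
    exact Or.inl (relatorMove_substPath_of_overlap hΩ hρ k (-1) hr.reads hr'.reads hr.lt hr'.lt
      (by omega))
  right
  rcases lt_or_ge a a' with haa | haa
  · exact exists_relatorMove_of_gain hΩ hρ hρ' k (-1) hr.reads hr'.reads hr.lt haa hr'.lt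
      (by omega) (by omega)
  · obtain ⟨w, h₁, h₂, h₃⟩ := exists_relatorMove_of_gain hΩ hρ' hρ (-1) k hr'.reads hr.reads hr'.lt
      (by omega) hr.lt (by omega) (by omega)
    exact ⟨w, h₂.symm, h₁.symm, h₃⟩

end StrongReduction

/-! ### Flips -/

section ToWord

variable [DecidableEq α] (y : FreeGroup α)

theorem noCancellation_toWord : NoCancellation (letterAt y.toWord) :=
  (isReduced_iff_noCancellation _).1 FreeGroup.isReduced_toWord

theorem toWord_prefixProd (a : ℤ) : (prefixProd y.toWord a).toWord = y.toWord.take a.toNat := by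
  rw [prefixProd, FreeGroup.toWord_mk]
  exact FreeGroup.IsReduced.reduce_eq (FreeGroup.isReduced_toWord.take _)

theorem toWord_suffixProd (a : ℤ) : (suffixProd y.toWord a).toWord = y.toWord.drop a.toNat := by
  rw [suffixProd, FreeGroup.toWord_mk]
  exact FreeGroup.IsReduced.reduce_eq (FreeGroup.isReduced_toWord.drop _)

variable {y} {ρ : ℤ → α × Bool} {a b : ℤ}

theorem MaximalReading.leftTight (h : MaximalReading (letterAt y.toWord) ρ a b) :
    LeftTight ρ (prefixProd y.toWord a) a := by
  obtain ⟨ha, hb⟩ := h.reads.bounds h.lt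
  have hlt := h.lt
  have hlast : (prefixProd y.toWord a).toWord.getLast? = letterAt y.toWord (a - 1) := by
    rw [toWord_prefixProd, ← letterAt_length_sub_one, List.length_take,
      min_eq_left (by omega), Int.toNat_of_nonneg ha, letterAt_take _ (by omega)]
  rw [LeftTight, hlast]
  refine ⟨fun hl => ?_, h.left_ne⟩
  exact noCancellation_toWord y _ _ _ hl (by rw [sub_add_cancel]; exact h.reads a le_rfl h.lt)
    (letterInv_letterInv _).symm

theorem MaximalReading.rightTight (h : MaximalReading (letterAt y.toWord) ρ a b) :
    RightTight ρ (suffixProd y.toWord b) b := by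
  obtain ⟨ha, -⟩ := h.reads.bounds h.lt
  have hlt := h.lt
  have hhead : (suffixProd y.toWord b).toWord.head? = letterAt y.toWord b := by
    rw [toWord_suffixProd, ← letterAt_zero, letterAt_drop _ _ le_rfl,
      Int.toNat_of_nonneg (by omega), zero_add]
  rw [RightTight, hhead]
  refine ⟨fun hr => ?_, h.right_ne⟩
  exact noCancellation_toWord y _ _ _ (h.reads (b - 1) (by omega) (by omega))
    (by rw [sub_add_cancel]; exact hr) rfl

end ToWord

/-- The partial word `z'` is obtained from `z` by replacing a reading of `ρ` on `[a, b)` by its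
complement in the period `π`, read backwards along `ρ`. -/
structure Flip (z z' : ℤ → Option (α × Bool)) (ρ : ℤ → α × Bool) (π a b : ℤ) : Prop where
  left : ∀ k, k < a → z' k = z k
  reads : Reads z' (reflect (2 * a) ρ) a (a + (π - (b - a)))
  right : ∀ k, a + (π - (b - a)) ≤ k → z' k = z (k + (2 * (b - a) - π))

theorem MaximalReading.flip [DecidableEq α] {y : FreeGroup α} {ρ : ℤ → α × Bool} {π a b : ℤ}
    (h : MaximalReading (letterAt y.toWord) ρ a b) (hρ : ∀ k, ρ (k + 1) ≠ letterInv (ρ k))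
    (hper : Function.Periodic ρ π) (hlt : b - a < π) :
    Flip (letterAt y.toWord) (letterAt (substPath y.toWord ρ a b (b - π)).toWord) ρ π a b := by
  obtain ⟨ha, hb⟩ := h.reads.bounds h.lt
  have hab := h.lt
  obtain ⟨n, hn⟩ := Int.le.dest (show a ≤ 2 * a - (b - π) by omega)
  have hleft := h.leftTight.reflect (2 * a)
  have hright := (h.rightTight.add_mul_period hper (-1)).reflect (2 * a)
  rw [show 2 * a - a = a by ring] at hleft
  rw [show 2 * a - (b + -1 * π) = a + n by omega] at hright
  have hword : (substPath y.toWord ρ a b (b - π)).toWord =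
      y.toWord.take a.toNat ++ subword (reflect (2 * a) ρ) a n ++ y.toWord.drop b.toNat := by
    rw [← toWord_prefixProd, ← toWord_suffixProd, ← toWord_mul_pathProd_mul (by omega)
      (reflect_succ_ne_letterInv hρ _) hleft hright, substPath, ← pathProd_reflect (2 * a), ← hn,
      show 2 * a - a = a by ring]
  have hlen : ((y.toWord.take a.toNat).length : ℤ) = a := by
    rw [List.length_take]
    omega
  rw [hword]
  refine ⟨fun k hk => ?_, fun k hk hk' => ?_, fun k hk => ?_⟩ <;>
    rw [letterAt_append_subword_append, hlen]
  · rw [if_pos hk, letterAt_take _ (by omega)]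
  · rw [if_neg (by omega), if_pos (by omega), add_sub_cancel]
  · rw [if_neg (by omega), if_neg (by omega), letterAt_drop _ _ (by omega)]
    congr 1
    omega

section Flip

variable {z z' : ℤ → Option (α × Bool)} {ρ : ℤ → α × Bool} {π a b : ℤ}

theorem Flip.left_ne (h : Flip z z' ρ π a b) (hz : NoCancellation z) (hr : Reads z ρ a b)
    (hab : a < b) : z' (a - 1) ≠ some (reflect (2 * a) ρ (a - 1)) := by
  rw [h.left _ (by omega), reflect, show 2 * a - 1 - (a - 1) = a by ring]
  intro hl
  exact hz _ _ _ hl (by rw [sub_add_cancel]; exact hr a le_rfl hab) (letterInv_letterInv _).symm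

theorem Flip.right_ne (h : Flip z z' ρ π a b) (hz : NoCancellation z)
    (hper : Function.Periodic ρ π) (hr : Reads z ρ a b) (hab : a < b) :
    z' (a + (π - (b - a))) ≠ some (reflect (2 * a) ρ (a + (π - (b - a)))) := by
  rw [h.right _ le_rfl, reflect, show 2 * a - 1 - (a + (π - (b - a))) = b - 1 - π by ring,
    hper.sub_eq, show a + (π - (b - a)) + (2 * (b - a) - π) = b - 1 + 1 by ring]
  intro hl
  exact hz _ _ _ (hr (b - 1) (by omega) (by omega)) hl rfl

end Flip

/-- The formal inverse of a partial word, positioned as in `reflect`. -/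
def reflectPartial (c : ℤ) (z : ℤ → Option (α × Bool)) : ℤ → Option (α × Bool) :=
  fun k => (z (c - 1 - k)).map letterInv

section ReflectPartial

variable {z z' : ℤ → Option (α × Bool)} {ρ : ℤ → α × Bool} {π a b : ℤ}

@[simp]
theorem reflectPartial_reflectPartial (c : ℤ) (z : ℤ → Option (α × Bool)) :
    reflectPartial c (reflectPartial c z) = z := by
  funext k
  rw [reflectPartial, reflectPartial, show c - 1 - (c - 1 - k) = k by ring, Option.map_map]
  cases z k <;> simp

theorem reflectPartial_eq_some_reflect (c : ℤ) {k : ℤ} :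
    reflectPartial c z k = some (reflect c ρ k) ↔ z (c - 1 - k) = some (ρ (c - 1 - k)) := by
  rw [reflectPartial, reflect, ← Option.map_some,
    (Option.map_injective letterInv_injective).eq_iff]

theorem Reads.reflect (h : Reads z ρ a b) (c : ℤ) :
    Reads (reflectPartial c z) (reflect c ρ) (c - b) (c - a) :=
  fun _ h₁ h₂ => (reflectPartial_eq_some_reflect c).2 (h _ (by omega) (by omega))

theorem Reads.of_reflectPartial {c : ℤ} (h : Reads (reflectPartial c z) ρ a b) :
    Reads z (SmallCancellation.reflect c ρ) (c - b) (c - a) := by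
  simpa only [reflectPartial_reflectPartial] using h.reflect c

theorem NoCancellation.reflectPartial (h : NoCancellation z) (c : ℤ) :
    NoCancellation (reflectPartial c z) := by
  intro k l l' hl hl'
  obtain ⟨m, hm, rfl⟩ := Option.map_eq_some_iff.1 hl
  obtain ⟨m', hm', rfl⟩ := Option.map_eq_some_iff.1 hl'
  rw [letterInv_letterInv]
  exact (h _ m' m hm' (by rw [← hm]; ring_nf)).symm

theorem Flip.reflect (h : Flip z z' ρ π a b) (hper : Function.Periodic ρ π) (c : ℤ) :
    Flip (SmallCancellation.reflectPartial c z)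
      (SmallCancellation.reflectPartial (c - (2 * (b - a) - π)) z')
      (SmallCancellation.reflect c ρ) π (c - b) (c - a) where
  left k hk := by
    rw [SmallCancellation.reflectPartial, SmallCancellation.reflectPartial, h.right _ (by omega)]
    ring_nf
  reads k hk hk' := by
    rw [SmallCancellation.reflectPartial, h.reads _ (by omega) (by omega), Option.map_some,
      SmallCancellation.reflect, letterInv_letterInv, SmallCancellation.reflect,
      SmallCancellation.reflect, letterInv_letterInv,
      show 2 * a - 1 - (c - (2 * (b - a) - π) - 1 - k) = c - 1 - (2 * (c - b) - 1 - k) - π by ring,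
      hper.sub_eq]
  right k hk := by
    rw [SmallCancellation.reflectPartial, SmallCancellation.reflectPartial, h.left _ (by omega)]
    ring_nf

end ReflectPartial

/-! ### The window left by a relator move -/

/-- No reading inside `[m, n)` covers three quarters of a period. -/
def StronglyReducedOn (Ω : (ℤ → α × Bool) → ℤ → Prop) (z : ℤ → Option (α × Bool)) (m n : ℤ) :
    Prop :=
  ∀ ρ π a b, Ω ρ π → m ≤ a → b ≤ n → Reads z ρ a b → 4 * (b - a) < 3 * π

/-- A reading of a tenth of a period starts at `m`, ends before `c`, and does not extend to the
left. -/
def LeftEnd (Ω : (ℤ → α × Bool) → ℤ → Prop) (z : ℤ → Option (α × Bool)) (m c : ℤ) : Prop :=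
  ∃ ρ π e, Ω ρ π ∧ e ≤ c ∧ Reads z ρ m e ∧ π ≤ 10 * (e - m) ∧ z (m - 1) ≠ some (ρ (m - 1))

/-- The mirror image of `LeftEnd`. -/
def RightEnd (Ω : (ℤ → α × Bool) → ℤ → Prop) (z : ℤ → Option (α × Bool)) (c n : ℤ) : Prop :=
  ∃ ρ π e, Ω ρ π ∧ c ≤ e ∧ Reads z ρ e n ∧ π ≤ 10 * (n - e) ∧ z n ≠ some (ρ n)

/-- The partial word `z` agrees with `y`, up to a shift by `s` on the right, outside a window
`[m, n)` that no strong reduction can erase: it is strongly reduced, and each of its two halves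
`[m, c)` and `[c, n)` has a rigid reading at the outer end. -/
structure FlipInvariant (Ω : (ℤ → α × Bool) → ℤ → Prop) (y z : ℤ → Option (α × Bool))
    (m c n s : ℤ) : Prop where
  eq_left : ∀ k, k < m → z k = y k
  eq_right : ∀ k, n ≤ k → z k = y (k + s)
  leftEnd : LeftEnd Ω z m c
  rightEnd : RightEnd Ω z c n
  inner : StronglyReducedOn Ω z m n

section FlipInvariant

variable {Ω : (ℤ → α × Bool) → ℤ → Prop} {y z z' : ℤ → Option (α × Bool)}
  {ρ : ℤ → α × Bool} {π a b m c n s : ℤ}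

theorem StronglyReduced.reflectPartial (hΩ : IsSmallCancellation Ω) (h : StronglyReduced Ω y)
    (d : ℤ) : StronglyReduced Ω (reflectPartial d y) := by
  intro ρ π a b hρ hr
  have := h _ _ _ _ (hΩ.reflect hρ d) hr.of_reflectPartial
  omega

theorem FlipInvariant.reflectPartial (hΩ : IsSmallCancellation Ω)
    (h : FlipInvariant Ω y z m c n s) (d : ℤ) :
    FlipInvariant Ω (reflectPartial (d + s) y) (reflectPartial d z) (d - n) (d - c) (d - m) s where
  eq_left k hk := by
    rw [SmallCancellation.reflectPartial, SmallCancellation.reflectPartial, h.eq_right _ (by omega)]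
    ring_nf
  eq_right k hk := by
    rw [SmallCancellation.reflectPartial, SmallCancellation.reflectPartial, h.eq_left _ (by omega)]
    ring_nf
  leftEnd := by
    obtain ⟨ρ, π, e, hρ, he, hr, hlong, hne⟩ := h.rightEnd
    refine ⟨_, π, d - e, hΩ.reflect hρ d, by omega, hr.reflect d, by omega, ?_⟩
    rwa [Ne, reflectPartial_eq_some_reflect, show d - 1 - (d - n - 1) = n by ring]
  rightEnd := by
    obtain ⟨ρ, π, e, hρ, he, hr, hlong, hne⟩ := h.leftEnd
    refine ⟨_, π, d - e, hΩ.reflect hρ d, by omega, hr.reflect d, by omega, ?_⟩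
    rwa [Ne, reflectPartial_eq_some_reflect, show d - 1 - (d - m) = m - 1 by ring]
  inner ρ π a b hρ ha hb hr := by
    have := h.inner _ _ _ _ (hΩ.reflect hρ d) (by omega) (by omega) hr.of_reflectPartial
    omega

theorem small_overlap_of_ne (hΩ : IsSmallCancellation Ω) {ρ' : ℤ → α × Bool} {π' e : ℤ}
    (hρ : Ω ρ π) (hρ' : Ω ρ' π') (hr : Reads z ρ a b) (hr' : Reads z ρ' m e)
    (hne : z (m - 1) ≠ some (ρ' (m - 1))) (ham : a < m) (hmb : m < b) :
    20 * (min b e - m) < π ∧ 20 * (min b e - m) < π' := by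
  by_contra hov
  obtain ⟨rfl, -⟩ := hΩ.eq_of_reads hρ hρ' hr hr' (by omega)
  exact hne (hr _ (by omega) (by omega))

/-- If a reading of `ρ'` in the flipped word continued past the flipped piece, the letters
`ρ b` and `ρ (b - 1)` before and after the cut would be mutually inverse. -/
theorem Flip.ne_of_reads (hF : Flip z z' ρ π a b) (hper : Function.Periodic ρ π)
    (hρ : ∀ k, ρ (k + 1) ≠ letterInv (ρ k)) (hab : a < b) (hlt : b - a < π)
    {ρ' : ℤ → α × Bool} {u v m e : ℤ} (hr : Reads z ρ a b) (hr' : Reads z ρ' m e) (hmb : m < b)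
    (hbe : b ≤ e) (hru : Reads z' (fun k => ρ' (k + (2 * (b - a) - π))) u v)
    (hu : u < a + (π - (b - a))) (hv : a + (π - (b - a)) ≤ v) : False := by
  have h₁ := (hF.reads _ (by omega) (by omega)).symm.trans
    (hru (a + (π - (b - a)) - 1) (by omega) (by omega))
  have h₂ := (hr (b - 1) (by omega) (by omega)).symm.trans (hr' (b - 1) (by omega) (by omega))
  rw [Option.some.injEq, SmallCancellation.reflect,
    show 2 * a - 1 - (a + (π - (b - a)) - 1) = b - π by ring, hper.sub_eq] at h₁
  beta_reduce at h₁
  rw [show a + (π - (b - a)) - 1 + (2 * (b - a) - π) = b - 1 by ring] at h₁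
  rw [Option.some.injEq, ← h₁] at h₂
  apply hρ (b - 1)
  rw [h₂, letterInv_letterInv, sub_add_cancel]

theorem Flip.stronglyReducedOn (hΩ : IsSmallCancellation Ω) (hF : Flip z z' ρ π a b)
    (hz : NoCancellation z) (hρ : Ω ρ π) (hr : Reads z ρ a b) (hlong : π ≤ 2 * (b - a))
    (hlt : b - a < π) (hin : StronglyReducedOn Ω z m n) (hmb : m < b)
    {ρ₁ : ℤ → α × Bool} {π₁ e : ℤ} (hρ₁ : Ω ρ₁ π₁) (hr₁ : Reads z ρ₁ m e)
    (hlong₁ : π₁ ≤ 10 * (e - m)) (hov : 20 * (min b e - m) < π₁) :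
    StronglyReducedOn Ω z' a (n - (2 * (b - a) - π)) := by
  intro ρ₂ π₂ u v hρ₂ hu hv hr₂
  by_contra! hlong₂
  have hπ₁ := hΩ.hundred_le hρ₁
  have hπ₂ := hΩ.hundred_le hρ₂
  have hρ' := hΩ.reflect hρ (2 * a)
  have hright := hF.right_ne hz (hΩ.periodic hρ) hr (by omega)
  set q := π - (b - a) with hq
  have hshift := hΩ.shift hρ₂ (-(2 * (b - a) - π))
  have hr₂' : Reads z (fun k => ρ₂ (k + -(2 * (b - a) - π))) (max u (a + q) + (2 * (b - a) - π))
      (v + (2 * (b - a) - π)) := by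
    intro k hk₁ hk₂
    rw [← hr₂ (k + -(2 * (b - a) - π)) (by omega) (by omega), hF.right _ (by omega),
      neg_add_cancel_right]
  rcases le_or_gt v (a + q) with hva | hva
  · have := (hΩ.eq_of_reads hρ₂ hρ' hr₂ hF.reads (by omega)).2
    omega
  rcases le_or_gt (a + q) u with hua | hua
  · have := hin _ _ _ _ hshift (by omega) (by omega) hr₂'
    omega
  by_cases hsmall : π₂ ≤ 20 * (a + q - u)
  · obtain ⟨rfl, -⟩ := hΩ.eq_of_reads hρ₂ hρ' hr₂ hF.reads (by omega)
    exact hright (hr₂ _ (by omega) (by omega))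
  · obtain ⟨rfl, -⟩ := hΩ.eq_of_reads hshift hρ₁ hr₂' hr₁ (by omega)
    refine hF.ne_of_reads (hΩ.periodic hρ) (hΩ.succ_ne_letterInv hρ) (by omega) hlt hr hr₁ hmb
      (by omega) (u := u) (v := v) ?_ hua (by omega)
    simpa only [add_neg_cancel_right] using hr₂

theorem StronglyReduced.lt_of_eq_left (hy : StronglyReduced Ω y) (h : ∀ k, k < m → z k = y k)
    (hρ : Ω ρ π) (hr : Reads z ρ a b) : 4 * (min b m - a) < 3 * π :=
  hy ρ π a (min b m) hρ fun k h₁ h₂ => by rw [← h k (by omega)]; exact hr k h₁ (by omega)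

theorem FlipInvariant.flip_left (hΩ : IsSmallCancellation Ω) (hI : FlipInvariant Ω y z m c n s)
    (hy : StronglyReduced Ω y) (hz : NoCancellation z) (hρ : Ω ρ π) (hr : Reads z ρ a b)
    (hlong : 3 * π ≤ 4 * (b - a)) (hF : b - a < π → Flip z z' ρ π a b) (ham : a < m)
    (hmb : m < b) :
    b - a < π ∧ FlipInvariant Ω y z' a (c - (2 * (b - a) - π)) (n - (2 * (b - a) - π))
      (s + (2 * (b - a) - π)) := by
  obtain ⟨ρ₁, π₁, e, hρ₁, hec, hr₁, hlong₁, hne₁⟩ := hI.leftEnd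
  obtain ⟨ρ₂, π₂, e', hρ₂, hce', hr₂, hlong₂, hne₂⟩ := hI.rightEnd
  have hπ := hΩ.hundred_le hρ
  have hπ₁ := hΩ.hundred_le hρ₁
  have hπ₂ := hΩ.hundred_le hρ₂
  obtain ⟨hov, hov₁⟩ := small_overlap_of_ne hΩ hρ hρ₁ hr hr₁ hne₁ ham hmb
  have houter := hy.lt_of_eq_left hI.eq_left hρ hr
  have hlt : b - a < π := by omega
  replace hF := hF hlt
  refine ⟨hlt, fun k hk => ?_, fun k hk => ?_, ?_, ?_, ?_⟩
  · rw [hF.left k hk, hI.eq_left k (by omega)]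
  · rw [hF.right k (by omega), hI.eq_right _ (by omega), add_assoc, add_comm s]
  · exact ⟨_, π, _, hΩ.reflect hρ (2 * a), by omega, hF.reads, by omega,
      hF.left_ne hz hr (by omega)⟩
  · refine ⟨_, π₂, e' - (2 * (b - a) - π), hΩ.shift hρ₂ (2 * (b - a) - π), by omega,
      fun k h₁ h₂ => ?_, by omega, ?_⟩
    · rw [hF.right k (by omega)]
      exact hr₂ _ (by omega) (by omega)
    · rw [hF.right _ (by omega), sub_add_cancel]
      exact hne₂
  · exact hF.stronglyReducedOn hΩ hz hρ hr (by omega) hlt hI.inner hmb hρ₁ hr₁ hlong₁ hov₁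

theorem FlipInvariant.flip_right (hΩ : IsSmallCancellation Ω) (hI : FlipInvariant Ω y z m c n s)
    (hy : StronglyReduced Ω y) (hz : NoCancellation z) (hρ : Ω ρ π) (hr : Reads z ρ a b)
    (hlong : 3 * π ≤ 4 * (b - a)) (hF : b - a < π → Flip z z' ρ π a b) (han : a < n)
    (hnb : n < b) : ∃ m' c' n' s', FlipInvariant Ω y z' m' c' n' s' := by
  obtain ⟨-, hI'⟩ := (hI.reflectPartial hΩ 0).flip_left hΩ (hy.reflectPartial hΩ _)
    (hz.reflectPartial 0) (hΩ.reflect hρ 0) (hr.reflect 0) (by omega)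
    (fun h => (hF (by omega)).reflect (hΩ.periodic hρ) 0) (by omega) (by omega)
  have hI'' := hI'.reflectPartial hΩ (0 - (2 * (b - a) - π))
  rw [reflectPartial_reflectPartial,
    show 0 - (2 * (b - a) - π) + (s + (2 * (0 - a - (0 - b)) - π)) = 0 + s by ring,
    reflectPartial_reflectPartial] at hI''
  exact ⟨_, _, _, _, hI''⟩

theorem FlipInvariant.flip (hΩ : IsSmallCancellation Ω) (hI : FlipInvariant Ω y z m c n s)
    (hy : StronglyReduced Ω y) (hz : NoCancellation z) (hρ : Ω ρ π) (hr : Reads z ρ a b)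
    (hlong : 3 * π ≤ 4 * (b - a)) (hF : b - a < π → Flip z z' ρ π a b) :
    ∃ m' c' n' s', FlipInvariant Ω y z' m' c' n' s' := by
  have hπ := hΩ.hundred_le hρ
  have hmb : m < b := by
    have := hy.lt_of_eq_left hI.eq_left hρ hr
    omega
  have han : a < n := by
    by_contra! hna
    have := hy _ π (a + s) (b + s) (hΩ.shift hρ (-s)) fun k h₁ h₂ => by
      rw [← hr (k + -s) (by omega) (by omega), hI.eq_right _ (by omega), neg_add_cancel_right]
    omega
  rcases lt_or_ge a m with ham | hma
  · exact ⟨_, _, _, _, (hI.flip_left hΩ hy hz hρ hr hlong hF ham hmb).2⟩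
  rcases le_or_gt b n with hbn | hnb
  · have := hI.inner _ _ _ _ hρ hma hbn hr
    omega
  · exact hI.flip_right hΩ hy hz hρ hr hlong hF han hnb

theorem FlipInvariant.of_flip (hΩ : IsSmallCancellation Ω) (hy : NoCancellation y) (hρ : Ω ρ π)
    (hr : Reads y ρ a b) (hhalf : π ≤ 2 * (b - a)) (hlt : 4 * (b - a) < 3 * π)
    (hF : Flip y z ρ π a b) :
    FlipInvariant Ω y z a (a + (π - (b - a)) / 2) (a + (π - (b - a))) (2 * (b - a) - π) := by
  have hπ := hΩ.hundred_le hρ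
  have hρ' := hΩ.reflect hρ (2 * a)
  refine ⟨hF.left, hF.right, ?_, ?_, fun ρ₁ π₁ u v hρ₁ hu hv hr₁ => ?_⟩
  · exact ⟨_, π, _, hρ', le_rfl, hF.reads.mono le_rfl (by omega), by omega,
      hF.left_ne hy hr (by omega)⟩
  · exact ⟨_, π, _, hρ', le_rfl, hF.reads.mono (by omega) le_rfl, by omega,
      hF.right_ne hy (hΩ.periodic hρ) hr (by omega)⟩
  · by_contra! hlong
    have hπ₁ := hΩ.hundred_le hρ₁
    have := (hΩ.eq_of_reads hρ₁ hρ' hr₁ hF.reads (by omega)).2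
    omega

end FlipInvariant

/-! ### Normal forms modulo the relators -/

theorem eq_neg_one_of_abs_add_mul_le {n k p : ℤ} (hk : k ≠ 0) (h : |n + k * p| ≤ n)
    (hn : 4 * n < 3 * p) : k = -1 := by
  have h₀ : 0 ≤ n := (abs_nonneg _).trans h
  obtain ⟨h₁, h₂⟩ := abs_le.1 h
  have lower : -2 < k := lt_of_mul_lt_mul_right (a := p) (by omega) (by omega)
  have upper : k < 1 := lt_of_mul_lt_mul_right (a := p) (by omega) (by omega)
  omega

/-- No reading in `z` covers a tenth of a period. -/
def TenthReduced (Ω : (ℤ → α × Bool) → ℤ → Prop) (z : ℤ → Option (α × Bool)) : Prop :=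
  ∀ ρ π a b, Ω ρ π → Reads z ρ a b → 10 * (b - a) < π

section Confluence

variable [DecidableEq α] {Ω : (ℤ → α × Bool) → ℤ → Prop} {x x' y y' z : FreeGroup α}

theorem not_stronglyReduced_of_strongReduction (h : StrongReduction Ω y z) :
    ¬ StronglyReduced Ω (letterAt y.toWord) := fun hy => by
  obtain ⟨ρ, π, a, b, hρ, hr, hlong, -⟩ := h
  exact (hy ρ π a b hρ hr.reads).not_ge hlong

theorem FlipInvariant.of_strongReduction (hΩ : IsSmallCancellation Ω)
    {y₀ : ℤ → Option (α × Bool)} (hy₀ : StronglyReduced Ω y₀) (hs : StrongReduction Ω y z)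
    (h : ∃ m c n s, FlipInvariant Ω y₀ (letterAt y.toWord) m c n s) :
    ∃ m c n s, FlipInvariant Ω y₀ (letterAt z.toWord) m c n s := by
  obtain ⟨m, c, n, s, hI⟩ := h
  obtain ⟨ρ, π, a, b, hρ, hr, hlong, rfl⟩ := hs
  exact hI.flip hΩ hy₀ (noCancellation_toWord y) hρ hr.reads hlong
    (hr.flip (hΩ.succ_ne_letterInv hρ) (hΩ.periodic hρ))

theorem RelatorMove.exists_flipInvariant (hΩ : IsSmallCancellation Ω) (hm : RelatorMove Ω y y')
    (hlt : y'.norm < y.norm) (hy : StronglyReduced Ω (letterAt y.toWord)) :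
    ∃ m c n s, FlipInvariant Ω (letterAt y.toWord) (letterAt y'.toWord) m c n s := by
  obtain ⟨ρ, π, a, b, k, hρ, hr, hk, hgain, rfl⟩ :=
    hm.exists_maximalReading hΩ (by rintro rfl; omega) hlt.le
  have hshort := hy _ _ _ _ hρ hr.reads
  obtain rfl := eq_neg_one_of_abs_add_mul_le hk hgain hshort
  have hhalf := le_two_mul_of_abs_add_mul_le hk hgain
  have hπ := hΩ.hundred_le hρ
  rw [show b + -1 * π = b - π by ring]
  exact ⟨_, _, _, _, .of_flip hΩ (noCancellation_toWord y) hρ hr.reads hhalf hshort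
    (hr.flip (hΩ.succ_ne_letterInv hρ) (hΩ.periodic hρ) (by omega))⟩

/-- A relator move to a strictly shorter element leaves in it a window that strong reductions
cannot erase, but `x` has no such window. -/
theorem RelatorMove.not_stronglyReduced (hΩ : IsSmallCancellation Ω)
    (hx : TenthReduced Ω (letterAt x.toWord)) (hm : RelatorMove Ω y y') (hlt : y'.norm < y.norm)
    (hs : Relation.ReflTransGen (StrongReduction Ω) y' x) :
    ¬ StronglyReduced Ω (letterAt y.toWord) := by
  intro hy
  have hI : ∃ m c n s, FlipInvariant Ω (letterAt y.toWord) (letterAt x.toWord) m c n s := by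
    clear hx
    induction hs with
    | refl => exact hm.exists_flipInvariant hΩ hlt hy
    | tail _ hstep ih => exact FlipInvariant.of_strongReduction hΩ hy hstep ih
  obtain ⟨m, c, n, s, hI⟩ := hI
  obtain ⟨ρ, π, e, hρ, -, hr, hlong, -⟩ := hI.leftEnd
  exact (hx ρ π m e hρ hr).not_ge hlong

theorem RelatorMove.norm_lt_of_tenthReduced (hΩ : IsSmallCancellation Ω)
    (hx : TenthReduced Ω (letterAt x.toWord)) (hm : RelatorMove Ω x y) (hne : x ≠ y) :
    x.norm < y.norm := by
  by_contra! hle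
  obtain ⟨ρ, π, a, b, k, hρ, hr, hk, hgain, -⟩ := hm.exists_maximalReading hΩ hne hle
  have hhalf := le_two_mul_of_abs_add_mul_le hk hgain
  have hshort := hx _ _ _ _ hρ hr.reads
  have hlt := hr.lt
  omega

/-- The elements that strong reductions bring to `x` are closed under relator moves. The outer
induction is on the larger of the two lengths, the inner one on their sum. -/
theorem RelatorMove.reflTransGen_strongReduction (hΩ : IsSmallCancellation Ω)
    (hx : TenthReduced Ω (letterAt x.toWord)) (N M : ℕ) :
    ∀ {y y'}, RelatorMove Ω y y' → max y.norm y'.norm ≤ N → y.norm + y'.norm ≤ M →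
      Relation.ReflTransGen (StrongReduction Ω) y x →
      Relation.ReflTransGen (StrongReduction Ω) y' x := by
  induction N using Nat.strong_induction_on generalizing M with
  | _ N ihN =>
  induction M using Nat.strong_induction_on with
  | _ M ihM =>
  intro y y' hm hN hM hs
  by_cases hne : y = y'
  · exact hne ▸ hs
  rcases le_or_gt y'.norm y.norm with hle | hlt
  · rcases hs.cases_head with rfl | ⟨z, hyz, hzx⟩
    · exact absurd (hm.norm_lt_of_tenthReduced hΩ hx hne) hle.not_gt
    have hz := hyz.norm_lt hΩ
    rcases hyz.relatorMove_or_exists hΩ hm hne hle with h | ⟨w, hy'w, hwz, hw⟩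
    · exact ihM _ (by omega) h.symm (by omega) le_rfl hzx
    · have hwx := ihN (max z.norm w.norm) (by omega) _ hwz.symm le_rfl le_rfl hzx
      exact ihM (w.norm + y'.norm) (by omega) hy'w.symm (by omega) le_rfl hwx
  · obtain ⟨z, hz⟩ := exists_strongReduction hΩ (hm.symm.not_stronglyReduced hΩ hx hlt hs)
    have hlt' := hz.norm_lt hΩ
    refine .head hz ?_
    rcases hz.relatorMove_or_exists hΩ hm.symm (Ne.symm hne) hlt.le with h | ⟨w, hyw, hwz, hw⟩
    · exact ihN (max y.norm z.norm) (by omega) _ h le_rfl le_rfl hs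
    · have hwx := ihN (max y.norm w.norm) (by omega) _ hyw le_rfl le_rfl hs
      exact ihN (max w.norm z.norm) (by omega) _ hwz le_rfl le_rfl hwx

theorem eq_of_reflTransGen_relatorMove (hΩ : IsSmallCancellation Ω)
    (hx : TenthReduced Ω (letterAt x.toWord)) (hx' : StronglyReduced Ω (letterAt x'.toWord))
    (h : Relation.ReflTransGen (RelatorMove Ω) x x') : x = x' := by
  have key : Relation.ReflTransGen (StrongReduction Ω) x' x := by
    clear hx'
    induction h with
    | refl => exact .refl
    | tail _ hm ih => exact hm.reflTransGen_strongReduction hΩ hx _ _ le_rfl le_rfl ih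
  rcases key.cases_head with h | ⟨z, hz, -⟩
  · exact h.symm
  · exact absurd hx' (not_stronglyReduced_of_strongReduction hz)

end Confluence

section NormalClosure

variable {Ω : (ℤ → α × Bool) → ℤ → Prop} {R : Set (FreeGroup α)}

theorem reflTransGen_relatorMove_of_mem_normalClosure
    (hR : ∀ r ∈ R, ∃ g ρ π, Ω ρ π ∧ r = g * pathProd ρ 0 π * g⁻¹) {n : FreeGroup α}
    (hn : n ∈ Subgroup.normalClosure R) (y : FreeGroup α) :
    Relation.ReflTransGen (RelatorMove Ω) y (n * y) := by
  unfold Subgroup.normalClosure at hn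
  induction hn using Subgroup.closure_induction generalizing y with
  | mem c hc =>
    obtain ⟨r, hr, hc⟩ := Group.mem_conjugatesOfSet_iff.1 hc
    obtain ⟨g, rfl⟩ := isConj_iff.1 hc
    obtain ⟨h, ρ, π, hρ, rfl⟩ := hR r hr
    refine .single ⟨g * h, h⁻¹ * g⁻¹ * y, ρ, π, 0, 0, 1, hρ, ?_, ?_⟩
    · rw [pathProd_self]; group
    · rw [zero_add, one_mul]; group
  | one => rw [one_mul]
  | mul a b _ _ iha ihb =>
    rw [mul_assoc]
    exact (ihb y).trans (iha _)
  | inv a _ iha =>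
    have hsymm : Std.Symm (RelatorMove Ω) := ⟨fun _ _ h => h.symm⟩
    have h := Relation.ReflTransGen.stdSymm (r := RelatorMove Ω) |>.symm _ _ (iha (a⁻¹ * y))
    rwa [mul_inv_cancel_left] at h

theorem eq_of_mem_normalClosure [DecidableEq α] (hΩ : IsSmallCancellation Ω)
    (hR : ∀ r ∈ R, ∃ g ρ π, Ω ρ π ∧ r = g * pathProd ρ 0 π * g⁻¹) {x x' : FreeGroup α}
    (hx : TenthReduced Ω (letterAt x.toWord)) (hx' : StronglyReduced Ω (letterAt x'.toWord))
    (h : x' * x⁻¹ ∈ Subgroup.normalClosure R) : x = x' := by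
  have hxx' := reflTransGen_relatorMove_of_mem_normalClosure hR h x
  rw [inv_mul_cancel_right] at hxx'
  exact eq_of_reflTransGen_relatorMove hΩ hx hx' hxx'

theorem tenthReduced_singleton (hΩ : IsSmallCancellation Ω) (l : α × Bool) :
    TenthReduced Ω (letterAt [l]) := by
  intro ρ π a b hρ hr
  have hπ := hΩ.hundred_le hρ
  by_contra! hlong
  obtain ⟨h₁, h₂⟩ := hr.bounds (by omega)
  simp only [List.length_singleton, Nat.cast_one] at h₂
  omega

theorem TenthReduced.stronglyReduced {z : ℤ → Option (α × Bool)} (hΩ : IsSmallCancellation Ω)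
    (h : TenthReduced Ω z) : StronglyReduced Ω z := by
  intro ρ π a b hρ hr
  have h₁ := hΩ.hundred_le hρ
  have h₂ := h _ _ _ _ hρ hr
  omega

theorem injective_presentedGroup_of (hΩ : IsSmallCancellation Ω)
    (hR : ∀ r ∈ R, ∃ g ρ π, Ω ρ π ∧ r = g * pathProd ρ 0 π * g⁻¹) :
    Function.Injective (PresentedGroup.of (rels := R)) := by
  classical
  intro s t hst
  have hmem : FreeGroup.of t * (FreeGroup.of s)⁻¹ ∈ Subgroup.normalClosure R := by
    rw [← PresentedGroup.mk_eq_one_iff, _root_.map_mul, _root_.map_inv, mul_inv_eq_one]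
    exact hst.symm
  have short (s : α) : TenthReduced Ω (letterAt (FreeGroup.of s).toWord) := by
    rw [FreeGroup.toWord_of]
    exact tenthReduced_singleton hΩ _
  exact FreeGroup.of_injective
    (eq_of_mem_normalClosure hΩ hR (short s) ((short t).stronglyReduced hΩ) hmem)

end NormalClosure

/-! ### Block words -/

/-- The letters of a list of generators, with positive exponent. -/
def positiveWord (l : List α) : List (α × Bool) := l.map fun x => (x, true)

@[simp]
theorem length_positiveWord (l : List α) : (positiveWord l).length = l.length :=
  List.length_map _

theorem mem_positiveWord {l : List α} {a : α × Bool} :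
    a ∈ positiveWord l ↔ a.2 = true ∧ a.1 ∈ l := by
  obtain ⟨x, s⟩ := a
  simp [positiveWord, eq_comm, and_comm]

theorem positiveWord_injective : Function.Injective (positiveWord : List α → _) :=
  List.map_injective_iff.2 fun _ _ h => congrArg Prod.fst h

/-- Data of a cyclic word `u y^{e 0} u y^{e 1} ⋯ u y^{e (n - 1)} v y^{e n}`, where `y` is `pivot`,
the positive word `u` is `stem`, `v` is `lastStem`, `n` is `last` and `e` is `exponent`. Every
relator other than `f₁ ^ p₁` and `f₂ ^ p₂` is conjugate to such a word. -/
structure BlockWord (α : Type*) where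
  pivot : α
  stem : List α
  last : ℕ
  exponent : ℕ → ℕ
  lastStem : List (α × Bool)

namespace BlockWord

/-- The part of the `k`-th block preceding the power of the pivot. -/
def stemAt (D : BlockWord α) (k : ℕ) : List (α × Bool) :=
  if k < D.last then positiveWord D.stem else D.lastStem

/-- The `k`-th block. -/
def block (D : BlockWord α) (k : ℕ) : List (α × Bool) :=
  D.stemAt k ++ List.replicate (D.exponent k) (D.pivot, true)

/-- The product of the first `n` blocks. -/
def word (D : BlockWord α) (n : ℕ) : List (α × Bool) := (List.range n).flatMap D.block

/-- The position at which the `n`-th block starts. -/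
def start (D : BlockWord α) (n : ℕ) : ℕ := (D.word n).length

/-- The length of the cyclic word. -/
def period (D : BlockWord α) : ℤ := D.start (D.last + 1)

/-- The bi-infinite periodic word spelled by the cyclic word from the position `0`. The default
value of `List.getD` is never taken when the period is positive. -/
def seq (D : BlockWord α) (t : ℤ) : α × Bool :=
  (D.word (D.last + 1)).getD (t % D.period).toNat (D.pivot, true)

variable (D : BlockWord α) {k : ℕ} {q t : ℤ}

theorem stemAt_of_lt (h : k < D.last) : D.stemAt k = positiveWord D.stem := if_pos h

theorem stemAt_last : D.stemAt D.last = D.lastStem := if_neg (lt_irrefl _)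

theorem length_stemAt_of_lt (h : k < D.last) : (D.stemAt k).length = D.stem.length := by
  rw [D.stemAt_of_lt h, length_positiveWord]

theorem length_block (k : ℕ) : (D.block k).length = (D.stemAt k).length + D.exponent k := by
  simp [block]

theorem word_succ (n : ℕ) : D.word (n + 1) = D.word n ++ D.block n := by
  simp [word, List.range_succ]

@[simp]
theorem start_zero : D.start 0 = 0 := rfl

theorem start_succ (n : ℕ) : D.start (n + 1) = D.start n + (D.stemAt n).length + D.exponent n := by
  rw [start, word_succ, List.length_append, length_block, add_assoc, start]

theorem start_mono : Monotone D.start :=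
  monotone_nat_of_le_succ fun n => by rw [start_succ]; omega

theorem start_succ_le_period (hk : k ≤ D.last) : (D.start (k + 1) : ℤ) ≤ D.period :=
  Int.ofNat_le.2 (D.start_mono (by omega))

theorem getElem?_word {n o : ℕ} (hk : k < n) (ho : o < (D.block k).length) :
    (D.word n)[D.start k + o]? = (D.block k)[o]? := by
  induction n, hk using Nat.le_induction with
  | base =>
    rw [word_succ, start, List.getElem?_append_right (by omega), Nat.add_sub_cancel_left]
  | succ n hn ih =>
    have hlen := D.start_mono hn
    rw [start_succ, add_assoc, ← length_block] at hlen
    rw [word_succ, List.getElem?_append_left (lt_of_lt_of_le (by omega) hlen), ih]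

theorem periodic_seq : Function.Periodic D.seq D.period := fun t => by
  simp [seq]

theorem getElem?_block {o : ℕ} (hk : k ≤ D.last) (ho : o < (D.block k).length)
    (ht : t = D.start k + o + q * D.period) : (D.block k)[o]? = some (D.seq t) := by
  have hper : D.seq (D.start k + o) = D.seq t := by
    rw [ht]
    exact (D.periodic_seq.int_mul q _).symm
  have hlt := D.start_succ_le_period hk
  rw [start_succ, add_assoc, ← length_block] at hlt
  rw [← hper, ← D.getElem?_word (Nat.lt_succ_of_le hk) ho, seq, Int.emod_eq_of_lt (by omega)
    (by omega), List.getD_eq_getElem?_getD, ← Nat.cast_add, Int.toNat_natCast,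
    D.getElem?_word (Nat.lt_succ_of_le hk) ho, List.getElem?_eq_getElem ho, Option.getD_some]

theorem getElem?_stemAt {o : ℕ} (hk : k ≤ D.last) (ho : o < (D.stemAt k).length)
    (ht : t = D.start k + o + q * D.period) : (D.stemAt k)[o]? = some (D.seq t) := by
  rw [← D.getElem?_block hk (by rw [length_block]; omega) ht, block, List.getElem?_append_left ho]

theorem seq_mem_stemAt (hk : k ≤ D.last) (h₁ : D.start k + q * D.period ≤ t)
    (h₂ : t < D.start k + (D.stemAt k).length + q * D.period) : D.seq t ∈ D.stemAt k :=
  List.mem_of_getElem? (D.getElem?_stemAt (o := (t - q * D.period - D.start k).toNat) (q := q) hk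
    (by omega) (by omega))

theorem seq_eq_pivot (hk : k ≤ D.last) (h₁ : D.start k + (D.stemAt k).length + q * D.period ≤ t)
    (h₂ : t < D.start (k + 1) + q * D.period) : D.seq t = (D.pivot, true) := by
  have hs := D.start_succ k
  obtain ⟨o, ho⟩ : ∃ o : ℕ, t = D.start k + o + q * D.period :=
    ⟨(t - q * D.period - D.start k).toNat, by omega⟩
  have hval := D.getElem?_block hk (by rw [length_block]; omega) ho
  rw [block, List.getElem?_append_right (by omega),
    List.getElem?_replicate_of_lt (by omega)] at hval
  exact (Option.some.inj hval).symm

theorem exists_start_le_lt (hp : 0 < D.period) (t : ℤ) : ∃ k q, k ≤ D.last ∧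
    D.start k + q * D.period ≤ t ∧ t < D.start (k + 1) + q * D.period := by
  have key (n u : ℕ) (hu : u < D.start n) : ∃ k < n, D.start k ≤ u ∧ u < D.start (k + 1) := by
    induction n with
    | zero => simp at hu
    | succ n ih =>
      rcases lt_or_ge u (D.start n) with h | h
      · obtain ⟨k, hk, hku⟩ := ih h
        exact ⟨k, by omega, hku⟩
      · exact ⟨n, by omega, h, hu⟩
  have h₀ := Int.emod_nonneg t hp.ne'
  have h₁ := Int.emod_lt_of_pos t hp
  have hdiv := Int.emod_add_mul_ediv t D.period
  rw [mul_comm] at hdiv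
  obtain ⟨k, hk, hle, hlt⟩ := key (D.last + 1) (t % D.period).toNat
    (by have : D.period = D.start (D.last + 1) := rfl; omega)
  exact ⟨k, t / D.period, by omega, by omega, by omega⟩

/-- The conditions on a block word under which its bi-infinite word is reduced and its blocks can
be recognised. -/
structure WellFormed (D : BlockWord α) : Prop where
  stem_ne_nil : D.stem ≠ []
  pivot_notMem_stem : D.pivot ∉ D.stem
  pivot_notMem_lastStem : ∀ s, (D.pivot, s) ∉ D.lastStem
  isReduced_lastStem : FreeGroup.IsReduced D.lastStem
  positive_of_mem_tail : ∀ l ∈ D.lastStem.tail, l.2 = true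
  two_le_exponent : ∀ k < D.last, 2 ≤ D.exponent k
  one_le_exponent_last : 1 ≤ D.exponent D.last
  two_le_last : 2 ≤ D.last
  hundred_le_period : 100 ≤ D.period

namespace WellFormed

variable {D} (h : D.WellFormed)
include h

theorem period_pos : 0 < D.period := lt_of_lt_of_le (by norm_num) h.hundred_le_period

theorem length_stem_pos : 0 < D.stem.length := List.length_pos_iff.2 h.stem_ne_nil

theorem one_le_exponent (hk : k ≤ D.last) : 1 ≤ D.exponent k := by
  rcases hk.lt_or_eq with hlt | rfl
  · exact one_le_two.trans (h.two_le_exponent k hlt)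
  · exact h.one_le_exponent_last

theorem pivot_notMem_stemAt (k : ℕ) (s : Bool) : (D.pivot, s) ∉ D.stemAt k := by
  unfold stemAt
  split_ifs
  · exact fun hmem => h.pivot_notMem_stem (mem_positiveWord.1 hmem).2
  · exact h.pivot_notMem_lastStem s

theorem seq_ne_pivot (hk : k ≤ D.last) (h₁ : D.start k + q * D.period ≤ t)
    (h₂ : t < D.start k + (D.stemAt k).length + q * D.period) (s : Bool) :
    D.seq t ≠ (D.pivot, s) := fun he =>
  h.pivot_notMem_stemAt k s (he ▸ D.seq_mem_stemAt hk h₁ h₂)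

theorem seq_mul_period_ne_pivot (q : ℤ) (s : Bool) : D.seq (q * D.period) ≠ (D.pivot, s) := by
  have hlast := h.two_le_last
  have hlen := D.length_stemAt_of_lt (k := 0) (by omega)
  have hpos := h.length_stem_pos
  exact h.seq_ne_pivot (k := 0) (q := q) (by omega) (by simp) (by simp; omega) s

theorem eq_start_last_of_negative (ht : (D.seq t).2 = false) :
    ∃ q : ℤ, t = D.start D.last + q * D.period ∧ ∃ v, D.lastStem = D.seq t :: v := by
  obtain ⟨k, q, hk, h₁, h₂⟩ := D.exists_start_le_lt h.period_pos t
  rcases lt_or_ge t (D.start k + (D.stemAt k).length + q * D.period) with hstem | hstem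
  swap
  · simp [D.seq_eq_pivot hk hstem h₂] at ht
  rcases hk.lt_or_eq with hlt | rfl
  · have hmem := D.seq_mem_stemAt hk h₁ hstem
    rw [D.stemAt_of_lt hlt, mem_positiveWord] at hmem
    simp [hmem.1] at ht
  obtain ⟨o, ho⟩ := Int.le.dest h₁
  have hval := D.getElem?_stemAt (o := o) (q := q) (t := t) le_rfl (by omega) (by omega)
  rw [stemAt_last] at hval
  cases hv : D.lastStem with
  | nil => simp [hv] at hval
  | cons l v =>
    rw [hv] at hval
    cases o with
    | zero =>
      obtain rfl : l = D.seq t := Option.some.inj hval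
      exact ⟨q, by omega, v, rfl⟩
    | succ o =>
      have hpos := h.positive_of_mem_tail (D.seq t) (by
        rw [hv]; exact List.mem_of_getElem? (List.getElem?_cons_succ ▸ hval))
      simp [hpos] at ht

theorem add_lt_of_negative {t t' : ℤ} (ht : (D.seq t).2 = false) (ht' : (D.seq t').2 = false)
    (hlt : t < t') : t + 2 < t' := by
  obtain ⟨q, rfl, -⟩ := h.eq_start_last_of_negative ht
  obtain ⟨q', rfl, -⟩ := h.eq_start_last_of_negative ht'
  have hper := h.hundred_le_period
  have hq : q < q' := lt_of_mul_lt_mul_right (by omega) h.period_pos.le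
  have hmul : (q + 1) * D.period ≤ q' * D.period :=
    mul_le_mul_of_nonneg_right (by omega) h.period_pos.le
  rw [add_mul] at hmul
  omega

theorem seq_succ_ne_of_negative (ht : (D.seq t).2 = false) :
    D.seq (t + 1) ≠ letterInv (D.seq t) := by
  obtain ⟨q, htq, v, hv⟩ := h.eq_start_last_of_negative ht
  have hstart := D.start_succ D.last
  have hexp := h.one_le_exponent_last
  cases v with
  | nil =>
    have hlen : (D.stemAt D.last).length = 1 := by rw [stemAt_last, hv]; rfl
    rw [D.seq_eq_pivot (k := D.last) (q := q) le_rfl (by omega) (by omega)]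
    intro he
    refine h.pivot_notMem_lastStem false ?_
    rw [hv, ← letterInv_letterInv (D.seq t), ← he]
    exact List.mem_singleton_self _
  | cons l v =>
    have hval := D.getElem?_stemAt (o := 1) (q := q) (t := t + 1) le_rfl
      (by rw [stemAt_last, hv]; simp) (by push_cast; omega)
    rw [stemAt_last, hv] at hval
    obtain rfl : l = D.seq (t + 1) := Option.some.inj hval
    have hred := h.isReduced_lastStem
    rw [hv, FreeGroup.isReduced_cons_cons] at hred
    exact ne_letterInv_iff.2 hred.1

theorem seq_ne_of_succ_negative (ht : (D.seq (t + 1)).2 = false) :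
    D.seq (t + 1) ≠ letterInv (D.seq t) := by
  obtain ⟨q, htq, v, hv⟩ := h.eq_start_last_of_negative ht
  obtain ⟨n, hn⟩ := Nat.exists_eq_add_of_le' (one_le_two.trans h.two_le_last)
  have hstart := D.start_succ n
  have hexp := h.two_le_exponent n (by omega)
  rw [← hn] at hstart
  rw [D.seq_eq_pivot (t := t) (k := n) (q := q) (by omega) (by omega) (by rw [← hn]; omega)]
  intro he
  exact h.pivot_notMem_lastStem false (hv ▸ he ▸ List.mem_cons_self)

theorem seq_succ_ne_letterInv (t : ℤ) : D.seq (t + 1) ≠ letterInv (D.seq t) := by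
  cases hs : (D.seq t).2
  · exact h.seq_succ_ne_of_negative hs
  · intro he
    exact h.seq_ne_of_succ_negative (by simp [he, letterInv, hs]) he

end WellFormed

end BlockWord

/-! ### Block words are determined by a single block -/

/-- The letter `y` fills the interval `[r, r + e)` of a bi-infinite word, and no larger one. -/
structure IsRun (β : ℤ → α × Bool) (y : α) (r : ℤ) (e : ℕ) : Prop where
  pred_ne : β (r - 1) ≠ (y, true)
  eq_of_mem : ∀ t, r ≤ t → t < r + e → β t = (y, true)
  end_ne : β (r + e) ≠ (y, true)

theorem IsRun.length_eq {β : ℤ → α × Bool} {y : α} {r : ℤ} {e n : ℕ} (hr : IsRun β y r e)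
    (heq : ∀ t, r ≤ t → t < r + n → β t = (y, true)) (hne : β (r + n) ≠ (y, true)) : e = n := by
  rcases lt_trichotomy e n with h | h | h
  · exact absurd (heq (r + e) (by omega) (by omega)) hr.end_ne
  · exact h
  · exact absurd (hr.eq_of_mem (r + n) (by omega) (by omega)) hne

theorem IsRun.of_forall_eq {β β' : ℤ → α × Bool} {y : α} {i j d r : ℤ} {e : ℕ}
    (hr : IsRun β y r e) (hag : ∀ t, i ≤ t → t < j → β t = β' (t + d)) (hi : i < r)
    (hj : r + e < j) : IsRun β' y (r + d) e where
  pred_ne := by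
    rw [show r + d - 1 = r - 1 + d by ring, ← hag _ (by omega) (by omega)]
    exact hr.pred_ne
  eq_of_mem t h₁ h₂ := by
    rw [← hr.eq_of_mem (t - d) (by omega) (by omega), hag _ (by omega) (by omega), sub_add_cancel]
  end_ne := by
    rw [add_right_comm, ← hag _ (by omega) (by omega)]
    exact hr.end_ne

namespace BlockWord

/-- The interval `[i, j)` contains the copy of the `k`-th block of `D` in the `q`-th period,
together with the next letter. The last two blocks are excluded: their powers of the pivot are
adjacent when the last stem is empty. -/
structure BlockWithin (D : BlockWord α) (i j : ℤ) (k : ℕ) (q : ℤ) : Prop where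
  succ_lt : k + 1 < D.last
  le_start : i ≤ D.start k + q * D.period
  start_lt : D.start (k + 1) + q * D.period < j

/-- Every interval of length at least `w` contains a whole block of `D`. -/
def BlocksWithin (D : BlockWord α) (w : ℤ) : Prop :=
  ∀ i j, w ≤ j - i → ∃ k q, D.BlockWithin i j k q

/-- The conditions under which a common block of the bi-infinite words of `D` and `D'` forces
`D = D'`. -/
structure Separated (D D' : BlockWord α) : Prop where
  length_stemAt_le : ∀ k ≤ D'.last, (D.pivot, true) ∈ D'.stemAt k → (D'.stemAt k).length ≤ 1
  of_exponent_eq : D.pivot = D'.pivot → ∀ k k', k + 1 < D.last → k' ≤ D'.last →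
    D.exponent k = D'.exponent k' →
      k = k' ∧ k' < D'.last ∧ D.stem.length = D'.stem.length ∧ (D.stem = D'.stem → D = D')
  exponent_ne_add : D.pivot = D'.pivot → D'.lastStem = [] → ∀ k, k + 1 < D.last →
    D.exponent k ≠ D'.exponent (D'.last - 1) + D'.exponent D'.last

variable {D D' : BlockWord α} {k : ℕ} {i j d q w : ℤ}

theorem WellFormed.blocksWithin (h : D.WellFormed)
    (hgap : ∀ k, k + 2 < D.last → (D.start (k + 2) : ℤ) - D.start k < w)
    (hend : D.period + D.start 1 - D.start (D.last - 2) < w) : D.BlocksWithin w := by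
  intro i j hij
  have hlast := h.two_le_last
  obtain ⟨k, q, hk, h₁, h₂⟩ := D.exists_start_le_lt h.period_pos i
  rcases lt_or_ge (k + 2) D.last with hlt | hge
  · have hw := hgap k hlt
    exact ⟨k + 1, q, hlt, by omega, by rw [show k + 1 + 1 = k + 2 from rfl]; omega⟩
  · have hper := D.start_succ_le_period hk
    have hmono := D.start_mono (show D.last - 2 ≤ k by omega)
    refine ⟨0, q + 1, by omega, ?_, ?_⟩ <;> rw [add_one_mul]
    · simp only [start_zero]
      omega
    · rw [zero_add]
      omega

theorem BlockWithin.not_forall_eq (h : D.WellFormed) (hb : D.BlockWithin i j k q) (z : α × Bool) :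
    ¬ ∀ t, i ≤ t → t < j → D.seq t = z := by
  intro hz
  obtain ⟨hk, hi, hj⟩ := hb
  have hlen := D.length_stemAt_of_lt (k := k) (by omega)
  have hpos := h.length_stem_pos
  have hs := D.start_succ k
  have hexp := h.two_le_exponent k (by omega)
  refine h.seq_ne_pivot (k := k) (q := q) (t := D.start k + q * D.period) (by omega) le_rfl
    (by omega) true ?_
  rw [hz _ hi (by omega), ← hz (D.start k + (D.stemAt k).length + q * D.period) (by omega)
    (by omega)]
  exact D.seq_eq_pivot (k := k) (q := q) (by omega) le_rfl (by omega)

theorem WellFormed.seq_start_succ_ne_pivot (h : D.WellFormed) (hk : k ≤ D.last)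
    (hlast : k + 1 = D.last → D.lastStem ≠ []) (q : ℤ) :
    D.seq (D.start (k + 1) + q * D.period) ≠ (D.pivot, true) := by
  rcases hk.lt_or_eq with hlt | rfl
  · refine h.seq_ne_pivot (k := k + 1) (q := q) hlt le_rfl ?_ true
    rcases eq_or_ne (k + 1) D.last with he | hne
    · have hpos := List.length_pos_iff.2 (hlast he)
      rw [he, stemAt_last]
      omega
    · have hpos := h.length_stem_pos
      rw [D.length_stemAt_of_lt (by omega)]
      omega
  · rw [← period, show D.period + q * D.period = (q + 1) * D.period by ring]
    exact h.seq_mul_period_ne_pivot _ _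

theorem WellFormed.isRun (h : D.WellFormed) (hk : k + 1 < D.last) (q : ℤ) :
    IsRun D.seq D.pivot (D.start k + D.stem.length + q * D.period) (D.exponent k) := by
  have hpos := h.length_stem_pos
  have hlen := D.length_stemAt_of_lt (k := k) (by omega)
  have hs := D.start_succ k
  refine ⟨?_, fun t h₁ h₂ => ?_, ?_⟩
  · exact h.seq_ne_pivot (k := k) (q := q) (by omega) (by omega) (by omega) true
  · exact D.seq_eq_pivot (k := k) (q := q) (by omega) (by omega) (by omega)
  · convert h.seq_start_succ_ne_pivot (k := k) (by omega) (by omega) q using 2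
    omega

theorem WellFormed.start_of_isRun (h : D.WellFormed) {y : α} {r : ℤ} {e : ℕ}
    (hy : ∀ k ≤ D.last, (y, true) ∈ D.stemAt k → (D.stemAt k).length ≤ 1) (he : 2 ≤ e)
    (hr : IsRun D.seq y r e) :
    y = D.pivot ∧ ∃ k q, k ≤ D.last ∧ r = D.start k + (D.stemAt k).length + q * D.period := by
  obtain ⟨k, q, hk, h₁, h₂⟩ := D.exists_start_le_lt h.period_pos r
  have hs := D.start_succ k
  have hexp := h.one_le_exponent hk
  have hval := hr.eq_of_mem r le_rfl (by omega)
  rcases lt_or_ge r (D.start k + (D.stemAt k).length + q * D.period) with hstem | hpow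
  · have hmem := D.seq_mem_stemAt hk h₁ hstem
    rw [hval] at hmem
    have hlen := hy k hk hmem
    have hnext := hr.eq_of_mem (r + 1) (by omega) (by omega)
    rw [D.seq_eq_pivot (k := k) (q := q) hk (by omega) (by omega)] at hnext
    rw [← hnext] at hmem
    exact absurd hmem (h.pivot_notMem_stemAt k true)
  · obtain rfl : y = D.pivot := by
      rw [D.seq_eq_pivot hk hpow h₂] at hval
      exact (Prod.ext_iff.1 hval).1.symm
    refine ⟨rfl, k, q, hk, by_contra fun hne => hr.pred_ne ?_⟩
    exact D.seq_eq_pivot (k := k) (q := q) hk (by omega) (by omega)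

theorem WellFormed.length_of_isRun (h : D.WellFormed) {e : ℕ} (hk : k ≤ D.last)
    (hr : IsRun D.seq D.pivot (D.start k + (D.stemAt k).length + q * D.period) e) :
    e = D.exponent k ∨
      D.lastStem = [] ∧ e = D.exponent (D.last - 1) + D.exponent D.last := by
  have hs := D.start_succ k
  rcases em (k + 1 = D.last ∧ D.lastStem = []) with ⟨hk', hnil⟩ | hnot
  · refine Or.inr ⟨hnil, ?_⟩
    have hs' := D.start_succ D.last
    have hlen : (D.stemAt D.last).length = 0 := by rw [stemAt_last, hnil]; rfl
    rw [show D.last - 1 = k by omega]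
    rw [hk'] at hs
    refine hr.length_eq (fun t h₁ h₂ => ?_) ?_
    · rcases lt_or_ge t (D.start D.last + q * D.period) with hlt | hge
      · exact D.seq_eq_pivot hk h₁ (by rwa [hk'])
      · exact D.seq_eq_pivot (k := D.last) (q := q) le_rfl (by omega) (by omega)
    · convert h.seq_start_succ_ne_pivot (k := D.last) le_rfl (by omega) q using 2
      omega
  · refine Or.inl (hr.length_eq (fun t h₁ h₂ => D.seq_eq_pivot hk h₁ (by omega)) ?_)
    convert h.seq_start_succ_ne_pivot hk (fun he hnil => hnot ⟨he, hnil⟩) q using 2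
    omega

theorem stem_eq_of_forall_eq {k' : ℕ} {q' : ℤ} (hk : k < D.last) (hk' : k' < D'.last)
    (hlen : D.stem.length = D'.stem.length)
    (hag : ∀ t, D.start k + q * D.period ≤ t → t < D.start k + D.stem.length + q * D.period →
      D.seq t = D'.seq (t + d))
    (hd : D.start k + q * D.period + d = D'.start k' + q' * D'.period) : D.stem = D'.stem := by
  refine positiveWord_injective (List.ext_getElem (by simp [hlen]) fun o ho ho' => ?_)
  rw [length_positiveWord] at ho ho'
  have hval := D.getElem?_stemAt (o := o) (q := q) hk.le (by rwa [D.length_stemAt_of_lt hk]) rfl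
  have hval' := D'.getElem?_stemAt (o := o) (q := q') hk'.le
    (by rwa [D'.length_stemAt_of_lt hk']) rfl
  rw [D.stemAt_of_lt hk, List.getElem?_eq_getElem (by simpa using ho), Option.some_inj] at hval
  rw [D'.stemAt_of_lt hk', List.getElem?_eq_getElem (by simpa using ho'), Option.some_inj] at hval'
  rw [hval, hval', hag _ (by omega) (by omega)]
  congr 1
  omega

theorem Separated.eq_of_forall_eq (hsep : Separated D D') (h : D.WellFormed) (h' : D'.WellFormed)
    (hb : D.BlockWithin i j k q) (hag : ∀ t, i ≤ t → t < j → D.seq t = D'.seq (t + d)) :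
    D = D' ∧ ∀ t, D.seq t = D'.seq (t + d) := by
  obtain ⟨hk, hi, hj⟩ := hb
  have hpos := h.length_stem_pos
  have hlen := D.length_stemAt_of_lt (k := k) (by omega)
  have hs := D.start_succ k
  have hrun := (h.isRun hk q).of_forall_eq hag (by omega) (by omega)
  obtain ⟨hy, k', q', hk', hr⟩ := h'.start_of_isRun hsep.length_stemAt_le
    (h.two_le_exponent k (by omega)) hrun
  rw [hr, hy] at hrun
  rcases h'.length_of_isRun hk' hrun with he | ⟨hnil, he⟩
  swap
  · exact absurd he (hsep.exponent_ne_add hy hnil k hk)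
  obtain ⟨rfl, hkk, hstem, hD⟩ := hsep.of_exponent_eq hy k k' hk hk' he
  rw [D'.length_stemAt_of_lt hkk, ← hstem] at hr
  obtain rfl := hD (stem_eq_of_forall_eq (k := k) (q := q) (q' := q') (by omega) hkk hstem
    (fun t h₁ h₂ => hag t (by omega) (by omega)) (by omega))
  refine ⟨rfl, fun t => ?_⟩
  rw [show d = (q' - q) * D.period by rw [sub_mul]; omega]
  exact (D.periodic_seq.int_mul (q' - q) t).symm

end BlockWord

/-! ### Families closed under shifts and reflections -/

/-- The shifts of the bi-infinite words of `B`, and of their formal inverses. -/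
def ShiftReflect (B : (ℤ → α × Bool) → ℤ → Prop) (ρ : ℤ → α × Bool) (π : ℤ) : Prop :=
  ∃ β, B β π ∧ ∃ c : ℤ, ρ = (fun k => β (k + c)) ∨ ρ = reflect c β

theorem ShiftReflect.of_base {B : (ℤ → α × Bool) → ℤ → Prop} {β : ℤ → α × Bool} {π : ℤ}
    (h : B β π) : ShiftReflect B β π :=
  ⟨β, h, 0, Or.inl (by simp)⟩

/-- A family of bi-infinite periodic words with few negative letters whose shifts and reflections
form a small cancellation family. Long common subwords are only excluded among the words of the
family themselves: the rarity of negative letters keeps these apart from the reflected words. -/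
structure IsBase (B : (ℤ → α × Bool) → ℤ → Prop) : Prop where
  periodic {β π} : B β π → Function.Periodic β π
  succ_ne_letterInv {β π} : B β π → ∀ k, β (k + 1) ≠ letterInv (β k)
  hundred_le {β π} : B β π → 100 ≤ π
  add_lt_of_negative {β π t t'} : B β π → (β t).2 = false → (β t').2 = false → t < t' → t + 2 < t'
  eq_of_overlap {β π β' π' i j d} : B β π → B β' π' →
    (∀ t, i ≤ t → t < j → β t = β' (t + d)) → π ≤ 20 * (j - i) →
      (∀ t, β t = β' (t + d)) ∧ π = π'

theorem exists_shift_ne_reflect {β β' : ℤ → α × Bool}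
    (hβ : ∀ t t', (β t).2 = false → (β t').2 = false → t < t' → t + 2 < t')
    (hβ' : ∀ t t', (β' t).2 = false → (β' t').2 = false → t < t' → t + 2 < t') (i c c' : ℤ) :
    ∃ k, i ≤ k ∧ k < i + 3 ∧ β (k + c) ≠ reflect c' β' k := by
  by_contra! h
  have sign (k : ℤ) (h₁ : i ≤ k) (h₂ : k < i + 3) :
      (β (k + c)).2 = !(β' (c' - 1 - k)).2 := by
    rw [h k h₁ h₂]
    rfl
  have h₀ := sign i (by omega) (by omega)
  have h₁ := sign (i + 1) (by omega) (by omega)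
  have h₂ := sign (i + 2) (by omega) (by omega)
  have a₀₁ := hβ (i + c) (i + 1 + c)
  have a₀₂ := hβ (i + c) (i + 2 + c)
  have a₁₂ := hβ (i + 1 + c) (i + 2 + c)
  have b₀₁ := hβ' (c' - 1 - (i + 1)) (c' - 1 - i)
  have b₀₂ := hβ' (c' - 1 - (i + 2)) (c' - 1 - i)
  have b₁₂ := hβ' (c' - 1 - (i + 2)) (c' - 1 - (i + 1))
  grind

namespace IsBase

variable {B : (ℤ → α × Bool) → ℤ → Prop} (hB : IsBase B)
include hB

theorem false_of_shift_eq_reflect {β β' : ℤ → α × Bool} {π π' i j c c' : ℤ} (hβ : B β π)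
    (hβ' : B β' π') (hag : ∀ k, i ≤ k → k < j → β (k + c) = reflect c' β' k)
    (hij : 3 ≤ j - i) : False := by
  obtain ⟨k, h₁, h₂, hne⟩ := exists_shift_ne_reflect (fun _ _ => hB.add_lt_of_negative hβ)
    (fun _ _ => hB.add_lt_of_negative hβ') i c c'
  exact hne (hag k h₁ (by omega))

theorem shift_eq_of_overlap {β β' : ℤ → α × Bool} {π π' i j c c' : ℤ} (hβ : B β π)
    (hβ' : B β' π') (hag : ∀ k, i ≤ k → k < j → β (k + c) = β' (k + c'))
    (hij : π ≤ 20 * (j - i)) : (fun k => β (k + c)) = (fun k => β' (k + c')) ∧ π = π' := by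
  obtain ⟨heq, hπ⟩ := hB.eq_of_overlap (i := i + c) (j := j + c) (d := c' - c) hβ hβ'
    (fun t h₁ h₂ => by
      have := hag (t - c) (by omega) (by omega)
      rwa [sub_add_cancel, show t - c + c' = t + (c' - c) by ring] at this) (by omega)
  refine ⟨funext fun k => ?_, hπ⟩
  rw [heq, show k + c + (c' - c) = k + c' by ring]

theorem reflect_eq_of_overlap {β β' : ℤ → α × Bool} {π π' i j c c' : ℤ} (hβ : B β π)
    (hβ' : B β' π') (hag : ∀ k, i ≤ k → k < j → reflect c β k = reflect c' β' k)
    (hij : π ≤ 20 * (j - i)) : reflect c β = reflect c' β' ∧ π = π' := by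
  obtain ⟨heq, hπ⟩ := hB.eq_of_overlap (i := c - j) (j := c - i) (d := c' - c) hβ hβ'
    (fun t h₁ h₂ => by
      have := letterInv_injective (hag (c - 1 - t) (by omega) (by omega))
      rwa [show c - 1 - (c - 1 - t) = t by ring,
        show c' - 1 - (c - 1 - t) = t + (c' - c) by ring] at this) (by omega)
  refine ⟨funext fun k => ?_, hπ⟩
  rw [reflect, reflect, heq,
    show c - 1 - k + (c' - c) = c' - 1 - k by ring]

theorem reflect_succ_ne_letterInv {β : ℤ → α × Bool} {π : ℤ} (hβ : B β π) (c k : ℤ) :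
    reflect c β (k + 1) ≠ letterInv (reflect c β k) := by
  intro he
  apply hB.succ_ne_letterInv hβ (c - 1 - (k + 1))
  rw [reflect, reflect, letterInv_letterInv] at he
  rw [he]
  congr 1
  ring

theorem isSmallCancellation : IsSmallCancellation (ShiftReflect B) where
  shift := by
    rintro ρ π ⟨β, hβ, c', rfl | rfl⟩ c
    · exact ⟨β, hβ, c + c', Or.inl (funext fun k => congrArg β (add_assoc k c c'))⟩
    · exact ⟨β, hβ, c' - c, Or.inr (funext fun k => by simp only [reflect]; congr 2; ring)⟩
  reflect_zero := by
    rintro ρ π ⟨β, hβ, c, rfl | rfl⟩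
    · exact ⟨β, hβ, c, Or.inr (funext fun k => by simp only [reflect]; congr 2; ring)⟩
    · refine ⟨β, hβ, c, Or.inl (funext fun k => ?_)⟩
      simp only [reflect, letterInv_letterInv]
      congr 1
      ring
  periodic := by
    rintro ρ π ⟨β, hβ, c, rfl | rfl⟩ k
    · change β (k + π + c) = β (k + c)
      rw [add_right_comm, hB.periodic hβ]
    · rw [reflect, reflect, show c - 1 - (k + π) = c - 1 - k - π by ring,
        (hB.periodic hβ).sub_eq]
  succ_ne_letterInv := by
    rintro ρ π ⟨β, hβ, c, rfl | rfl⟩ k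
    · change β (k + 1 + c) ≠ letterInv (β (k + c))
      rw [add_right_comm]
      exact hB.succ_ne_letterInv hβ _
    · exact hB.reflect_succ_ne_letterInv hβ c k
  hundred_le := by
    rintro ρ π ⟨β, hβ, -⟩
    exact hB.hundred_le hβ
  eq_of_overlap := by
    rintro ρ π ρ' π' i j ⟨β, hβ, c, rfl | rfl⟩ ⟨β', hβ', c', rfl | rfl⟩ hag hij <;>
      have hπ := hB.hundred_le hβ
    · exact hB.shift_eq_of_overlap hβ hβ' hag hij
    · exact (hB.false_of_shift_eq_reflect hβ hβ' hag (by omega)).elim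
    · exact (hB.false_of_shift_eq_reflect hβ' hβ (fun k h₁ h₂ => (hag k h₁ h₂).symm)
        (by omega)).elim
    · exact hB.reflect_eq_of_overlap hβ hβ' hag hij

end IsBase

/-! ### Block words of relators -/

theorem mk_positiveWord (l : List α) :
    (mk (positiveWord l) : FreeGroup α) = (l.map FreeGroup.of).prod := by
  induction l with
  | nil => rfl
  | cons a l ih => rw [List.map_cons, List.prod_cons, ← ih]; rfl

theorem mk_replicate (y : α) (n : ℕ) :
    (mk (List.replicate n (y, true)) : FreeGroup α) = FreeGroup.of y ^ n := by
  induction n with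
  | zero => rfl
  | succ n ih => rw [pow_succ', ← ih, List.replicate_succ]; rfl

theorem isReduced_positiveWord (l : List α) : FreeGroup.IsReduced (positiveWord l) := by
  rw [FreeGroup.IsReduced, List.isChain_iff_getElem]
  intro i hi _
  simp [positiveWord]

theorem toWord_mk_of_isReduced [DecidableEq α] {l : List (α × Bool)} (h : FreeGroup.IsReduced l) :
    (mk l).toWord = l := by
  rw [FreeGroup.toWord_mk, h.reduce_eq]

theorem toWord_inv_of_mul_mk_positiveWord [DecidableEq α] (a : α) (l : List α) :
    ((FreeGroup.of a)⁻¹ * mk (positiveWord l)).toWord =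
      if l.head? = some a then positiveWord l.tail else (a, false) :: positiveWord l := by
  cases l with
  | nil => exact toWord_mk_of_isReduced FreeGroup.IsReduced.singleton
  | cons x l =>
    rw [List.head?_cons]
    split_ifs with h
    · rw [mk_positiveWord, List.map_cons, List.prod_cons, Option.some.inj h, inv_mul_cancel_left,
        ← mk_positiveWord, toWord_mk_of_isReduced (isReduced_positiveWord l), List.tail_cons]
    · exact toWord_mk_of_isReduced (FreeGroup.isReduced_cons_cons.2
        ⟨fun he => absurd (congrArg some he.symm) h, isReduced_positiveWord (x :: l)⟩)

theorem prod_map_range_succ_mul_eq_conj {G : Type*} [Group G] (x y t : G) (f : ℕ → ℕ) (n : ℕ) :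
    ((List.range (n + 1)).map fun k => x * y ^ f k).prod * t =
      x * y ^ f 0 * (((List.range n).map fun k => x * y ^ f (k + 1)).prod * (t * x * y ^ f 0)) *
        (x * y ^ f 0)⁻¹ := by
  rw [List.prod_range_succ']
  group

namespace BlockWord

/-- The cyclic word of `(∏ k ≤ n, u * y ^ f k) * t`, started at the second factor, so that `t` is
absorbed into the last stem `v`, a word spelling `t * u`. -/
def ofProduct (y : α) (u : List α) (n : ℕ) (f : ℕ → ℕ) (v : List (α × Bool)) : BlockWord α where
  pivot := y
  stem := u
  last := n
  exponent k := if k < n then f (k + 1) else f 0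
  lastStem := v

theorem mk_block (D : BlockWord α) (k : ℕ) :
    FreeGroup.mk (D.block k) =
      FreeGroup.mk (D.stemAt k) * FreeGroup.of D.pivot ^ D.exponent k := by
  rw [block, ← FreeGroup.mul_mk, mk_replicate]

theorem mk_word (D : BlockWord α) (n : ℕ) :
    FreeGroup.mk (D.word n) = ((List.range n).map fun k => FreeGroup.mk (D.block k)).prod := by
  induction n with
  | zero => rfl
  | succ n ih => rw [word_succ, ← FreeGroup.mul_mk, ih, List.prod_range_succ]

theorem subword_seq (D : BlockWord α) :
    subword D.seq 0 (D.start (D.last + 1)) = D.word (D.last + 1) := by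
  refine List.ext_getElem (length_subword _ _ _) fun t ht ht' => ?_
  rw [length_subword] at ht
  simp only [subword, List.getElem_map, List.getElem_range, zero_add]
  rw [seq, period, Int.emod_eq_of_lt (by omega) (by omega), Int.toNat_natCast,
    List.getD_eq_getElem _ _ ht']

theorem pathProd_seq (D : BlockWord α) :
    pathProd D.seq 0 D.period = FreeGroup.mk (D.word (D.last + 1)) := by
  have h := pathProd_add_natCast D.seq 0 (D.start (D.last + 1))
  rwa [zero_add, subword_seq] at h

theorem exists_prod_mul_eq_conj_pathProd (y : α) (u : List α) (n : ℕ) (f : ℕ → ℕ)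
    {v : List (α × Bool)} {x t : FreeGroup α} (hx : FreeGroup.mk (positiveWord u) = x)
    (hv : FreeGroup.mk v = t * x) :
    ∃ g, ((List.range (n + 1)).map fun k => x * FreeGroup.of y ^ f k).prod * t =
      g * pathProd (ofProduct y u n f v).seq 0 (ofProduct y u n f v).period * g⁻¹ := by
  refine ⟨x * FreeGroup.of y ^ f 0, (prod_map_range_succ_mul_eq_conj _ _ _ f n).trans ?_⟩
  have hfirst : ((List.range n).map fun k => FreeGroup.mk ((ofProduct y u n f v).block k)) =
      (List.range n).map fun k => x * FreeGroup.of y ^ f (k + 1) := by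
    refine List.map_congr_left fun k hk => ?_
    simp [mk_block, stemAt, ofProduct, List.mem_range.1 hk, hx]
  have hlast : FreeGroup.mk ((ofProduct y u n f v).block n) = t * x * FreeGroup.of y ^ f 0 := by
    simp [mk_block, stemAt, ofProduct, hv]
  rw [pathProd_seq, mk_word, show (ofProduct y u n f v).last = n from rfl, List.prod_range_succ,
    hfirst, hlast]

theorem start_add_mul_le (D : BlockWord α) {c i n : ℕ}
    (h : ∀ k, i ≤ k → k < i + n → c ≤ (D.stemAt k).length + D.exponent k) :
    D.start i + n * c ≤ D.start (i + n) := by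
  induction n with
  | zero => simp
  | succ n ih =>
    have hstep := h (i + n) (by omega) (by omega)
    have hn := ih fun k hk hk' => h k hk (by omega)
    rw [← add_assoc i n 1, start_succ, Nat.succ_mul]
    omega

theorem WellFormed.blocksWithin_of_length_le {D : BlockWord α} (h : D.WellFormed) {M : ℕ}
    (hM : ∀ k ≤ D.last, (D.block k).length ≤ M) : D.BlocksWithin (4 * M + 1) := by
  have step (k : ℕ) (hk : k ≤ D.last) : D.start (k + 1) ≤ D.start k + M := by
    rw [start_succ, add_assoc, ← length_block]
    exact Nat.add_le_add_left (hM k hk) _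
  refine h.blocksWithin (fun k hk => ?_) ?_
  · have h₀ := step k (by omega)
    have h₁ := step (k + 1) (by omega)
    rw [show k + 1 + 1 = k + 2 from rfl] at h₁
    omega
  · obtain ⟨n, hn⟩ := Nat.exists_eq_add_of_le' h.two_le_last
    have h₀ := step n (by omega)
    have h₁ := step (n + 1) (by omega)
    have h₂ := step (n + 2) (by omega)
    have hfirst := step 0 (by omega)
    rw [show n + 1 + 1 = n + 2 from rfl] at h₁
    rw [period, hn, Nat.add_sub_cancel]
    rw [start_zero, zero_add] at hfirst
    omega

end BlockWord

/-! ### The words `x y ^ (lo + 1)² ⋯ x y ^ (lo + 1000)²` -/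

/-- The cyclic word of `chainProd (1000 * q) x y`. -/
def chainWord (q : ℕ) (x y : α) : BlockWord α :=
  .ofProduct y [x] 999 (fun k => (1000 * q + k + 1) ^ 2) (positiveWord [x])

section ChainWord

variable (q : ℕ) (x y : α) {k : ℕ}

theorem stemAt_chainWord (k : ℕ) : (chainWord q x y).stemAt k = [(x, true)] := by
  unfold BlockWord.stemAt
  split_ifs <;> rfl

theorem exponent_chainWord (k : ℕ) :
    (chainWord q x y).exponent k = (1000 * q + if k < 999 then k + 2 else 1) ^ 2 := by
  split_ifs with hk
  exacts [if_pos hk, if_neg hk]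

variable {q x y} in
theorem eq_of_exponent_chainWord_eq {q' k' : ℕ} {x' y' : α} (hk : k ≤ 999) (hk' : k' ≤ 999)
    (h : (chainWord q x y).exponent k = (chainWord q' x' y').exponent k') : q = q' ∧ k = k' := by
  rw [exponent_chainWord, exponent_chainWord] at h
  have heq := Nat.pow_left_injective two_ne_zero h
  split_ifs at heq <;> omega

theorem length_block_chainWord_le (hk : k ≤ 999) :
    ((chainWord q x y).block k).length ≤ 1 + (1000 * q + 1000) ^ 2 := by
  rw [BlockWord.length_block, stemAt_chainWord, exponent_chainWord, List.length_singleton]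
  gcongr
  split_ifs <;> omega

theorem le_period_chainWord :
    20 * (4 * (1 + (1000 * q + 1000) ^ 2 : ℕ) + 1 : ℤ) ≤ (chainWord q x y).period := by
  have hlarge : 0 + 499 * (1 + (1000 * q + 502) ^ 2) ≤ (chainWord q x y).start (500 + 499) := by
    refine le_trans (Nat.add_le_add_right (Nat.zero_le _) _)
      ((chainWord q x y).start_add_mul_le fun k h₁ h₂ => ?_)
    rw [stemAt_chainWord, exponent_chainWord, if_pos h₂, List.length_singleton]
    gcongr
    omega
  have hperiod := (chainWord q x y).start_mono (show 500 + 499 ≤ 999 + 1 by norm_num)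
  refine le_trans ?_ (Int.ofNat_le.2 (hlarge.trans hperiod))
  have hq : (0 : ℤ) ≤ q := Int.natCast_nonneg q
  push_cast
  nlinarith

variable {q x y}

theorem wellFormed_chainWord (hxy : y ≠ x) : (chainWord q x y).WellFormed where
  stem_ne_nil := List.cons_ne_nil _ _
  pivot_notMem_stem := List.mem_singleton.not.2 hxy
  pivot_notMem_lastStem s hs := hxy (congrArg Prod.fst (List.mem_singleton.1 hs))
  isReduced_lastStem := isReduced_positiveWord [x]
  positive_of_mem_tail := List.forall_mem_nil _
  two_le_exponent k hk := by
    rw [exponent_chainWord, if_pos (show k < 999 from hk), ← add_assoc]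
    exact (Nat.le_add_left 2 _).trans (Nat.le_self_pow two_ne_zero _)
  one_le_exponent_last := (exponent_chainWord q x y _).symm ▸
    Nat.one_le_pow _ _ (by split_ifs <;> omega)
  two_le_last := show 2 ≤ 999 by norm_num
  hundred_le_period := le_trans (by push_cast; nlinarith) (le_period_chainWord q x y)

theorem blocksWithin_chainWord (hxy : y ≠ x) :
    (chainWord q x y).BlocksWithin (4 * (1 + (1000 * q + 1000) ^ 2 : ℕ) + 1) :=
  (wellFormed_chainWord hxy).blocksWithin_of_length_le fun _ hk =>
    length_block_chainWord_le q x y hk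

end ChainWord

/-- `ChainTriple q x y` says that `chainProd (1000 * q) x y` is a relator of `G(𝒜)`. -/
inductive ChainTriple {A : Type} : ℕ → GenSym A → GenSym A → Prop
  | elt_c (a : A) : ChainTriple 0 (.elt a) .c
  | elt_d (a : A) : ChainTriple 0 (.elt a) .d
  | b_f1 : ChainTriple 1 .b .f1
  | b_f2 : ChainTriple 1 .b .f2
  | c_f1 : ChainTriple 2 .c .f1
  | c_f2 : ChainTriple 2 .c .f2
  | d_f1 : ChainTriple 3 .d .f1
  | d_f2 : ChainTriple 3 .d .f2
  | f1_f2 : ChainTriple 4 .f1 .f2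
  | f2_f1 : ChainTriple 4 .f2 .f1

namespace ChainTriple

variable {A : Type} {q : ℕ} {x y : GenSym A} (h : ChainTriple q x y)
include h

theorem le_four : q ≤ 4 := by
  cases h <;> norm_num

theorem right_ne_left : y ≠ x := by
  cases h <;> exact nofun

theorem right_ne_b : y ≠ .b := by
  cases h <;> exact nofun

theorem right_ne_elt (a : A) : y ≠ .elt a := by
  cases h <;> exact nofun

end ChainTriple

/-! ### The words `w_m` -/

/-- The list of generators of the arguments of a symbol. -/
def argWord {A : Type} {n : ℕ} (as : Fin n → A) : List (GenSym A) :=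
  List.ofFn fun i => .elt (as i)

theorem length_argWord {A : Type} {n : ℕ} (as : Fin n → A) : (argWord as).length = n :=
  List.length_ofFn

theorem argWord_injective {A : Type} {n : ℕ} :
    Function.Injective (argWord : (Fin n → A) → List (GenSym A)) := fun _ _ h =>
  funext fun i => GenSym.elt.inj (congrFun (List.ofFn_injective h) i)

theorem exists_eq_elt_of_mem_argWord {A : Type} {n : ℕ} {as : Fin n → A} {z : GenSym A}
    (h : z ∈ argWord as) : ∃ a, z = .elt a := by
  obtain ⟨i, rfl⟩ := List.mem_ofFn.1 h
  exact ⟨as i, rfl⟩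

section SymbolWord

variable (S : IndexedStructure) (m : ℕ) (as : Fin (S.arity m) → S.A)

open Classical in
/-- The factor following `w_m` in a relator of the `m`-th symbol: the inverse of the value of a
function symbol, and `1` for a relation symbol. -/
noncomputable def symbolTail : FreeGroup (GenSym S.A) :=
  if S.isFunc m then (of (.elt (S.funcInterp m as)))⁻¹ else 1

open Classical in
/-- The last stem of the cyclic word of a relator of the `m`-th symbol. -/
noncomputable def symbolStem : List (GenSym S.A × Bool) :=
  (symbolTail S m as * mk (positiveWord (argWord as))).toWord

/-- The cyclic word of a relator of the `m`-th symbol. -/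
noncomputable def symbolWord : BlockWord (GenSym S.A) :=
  .ofProduct .b (argWord as) 99 (fun k => 100 * m + k + 1) (symbolStem S m as)

theorem symbolStem_cases : symbolStem S m as = positiveWord (argWord as) ∨
    symbolStem S m as = positiveWord (argWord as).tail ∨
    ∃ a, symbolStem S m as = (.elt a, false) :: positiveWord (argWord as) := by
  classical
  unfold symbolStem symbolTail
  split_ifs
  · rw [toWord_inv_of_mul_mk_positiveWord]
    split_ifs
    exacts [.inr (.inl rfl), .inr (.inr ⟨_, rfl⟩)]
  · rw [one_mul]
    exact .inl (toWord_mk_of_isReduced (isReduced_positiveWord _))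

theorem length_symbolStem_le : (symbolStem S m as).length ≤ S.arity m + 1 := by
  have hlen := length_argWord as
  rcases symbolStem_cases S m as with h | h | ⟨a, h⟩ <;>
    simp only [h, length_positiveWord, List.length_tail, List.length_cons] <;> omega

variable {S m as}

theorem exists_eq_elt_of_mem_symbolStem {l : GenSym S.A × Bool} (h : l ∈ symbolStem S m as) :
    ∃ a, l.1 = .elt a := by
  rcases symbolStem_cases S m as with hs | hs | ⟨a, hs⟩ <;> rw [hs] at h
  · exact exists_eq_elt_of_mem_argWord (mem_positiveWord.1 h).2
  · exact exists_eq_elt_of_mem_argWord (List.mem_of_mem_tail (mem_positiveWord.1 h).2)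
  · rcases List.mem_cons.1 h with rfl | h
    · exact ⟨a, rfl⟩
    · exact exists_eq_elt_of_mem_argWord (mem_positiveWord.1 h).2

theorem positive_of_mem_tail_symbolStem {l : GenSym S.A × Bool}
    (h : l ∈ (symbolStem S m as).tail) : l.2 = true := by
  rcases symbolStem_cases S m as with hs | hs | ⟨a, hs⟩ <;> rw [hs] at h
  · exact (mem_positiveWord.1 (List.mem_of_mem_tail h)).1
  · exact (mem_positiveWord.1 (List.mem_of_mem_tail h)).1
  · exact (mem_positiveWord.1 h).1

theorem exists_eq_elt_of_mem_stemAt_symbolWord {k : ℕ} {l : GenSym S.A × Bool}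
    (h : l ∈ (symbolWord S m as).stemAt k) : ∃ a, l.1 = .elt a := by
  unfold BlockWord.stemAt at h
  split_ifs at h
  exacts [exists_eq_elt_of_mem_argWord (mem_positiveWord.1 h).2, exists_eq_elt_of_mem_symbolStem h]

variable (S m as)

theorem exponent_symbolWord (k : ℕ) :
    (symbolWord S m as).exponent k = 100 * m + if k < 99 then k + 2 else 1 := by
  split_ifs with hk
  exacts [if_pos hk, if_neg hk]

theorem length_stemAt_symbolWord {k : ℕ} (hk : k < 99) :
    ((symbolWord S m as).stemAt k).length = S.arity m := by
  rw [BlockWord.length_stemAt_of_lt _ hk]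
  exact length_argWord as

theorem start_succ_symbolWord {k : ℕ} (hk : k < 99) : (symbolWord S m as).start (k + 1) =
    (symbolWord S m as).start k + S.arity m + (100 * m + k + 2) := by
  rw [BlockWord.start_succ, length_stemAt_symbolWord S m as hk, exponent_symbolWord, if_pos hk,
    add_assoc (100 * m)]

theorem period_symbolWord : (symbolWord S m as).period =
    ((symbolWord S m as).start 99 + (symbolStem S m as).length + (100 * m + 1) : ℕ) := by
  have h := (symbolWord S m as).start_succ 99
  rw [exponent_symbolWord, if_neg (lt_irrefl 99)] at h
  exact congrArg Nat.cast h

theorem le_start_symbolWord :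
    99 * S.arity m + 9900 * m + 2648 ≤ (symbolWord S m as).start 99 := by
  have hfirst := (symbolWord S m as).start_add_mul_le (i := 0) (n := 49)
    (c := S.arity m + (100 * m + 2)) fun k _ hk => by
      rw [length_stemAt_symbolWord S m as (by omega), exponent_symbolWord, if_pos (by omega)]
      omega
  have hsecond := (symbolWord S m as).start_add_mul_le (i := 49) (n := 50)
    (c := S.arity m + (100 * m + 51)) fun k hk₁ hk₂ => by
      rw [length_stemAt_symbolWord S m as (by omega), exponent_symbolWord, if_pos (by omega)]
      omega
  rw [BlockWord.start_zero, zero_add] at hfirst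
  linarith

variable {S m} (hm : 1 ≤ m)
include hm

theorem le_period_symbolWord :
    20 * (4 * S.arity m + 400 * m + 204 : ℤ) ≤ (symbolWord S m as).period := by
  have hstart := le_start_symbolWord S m as
  have harity := S.arity_pos m hm
  rw [period_symbolWord]
  omega

theorem wellFormed_symbolWord : (symbolWord S m as).WellFormed where
  stem_ne_nil h := by
    have hlen := length_argWord as
    have harity := S.arity_pos m hm
    rw [show argWord as = [] from h] at hlen
    exact absurd harity (by simp [← hlen])
  pivot_notMem_stem h := nomatch exists_eq_elt_of_mem_argWord h
  pivot_notMem_lastStem _ h := nomatch exists_eq_elt_of_mem_symbolStem h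
  isReduced_lastStem := by
    classical
    exact FreeGroup.isReduced_toWord
  positive_of_mem_tail _ := positive_of_mem_tail_symbolStem
  two_le_exponent k hk := by
    rw [exponent_symbolWord, if_pos (show k < 99 from hk)]
    omega
  one_le_exponent_last := by
    rw [exponent_symbolWord]
    omega
  two_le_last := show 2 ≤ 99 by norm_num
  hundred_le_period := le_trans (by omega) (le_period_symbolWord as hm)

theorem blocksWithin_symbolWord :
    (symbolWord S m as).BlocksWithin (4 * S.arity m + 400 * m + 204) := by
  refine (wellFormed_symbolWord as hm).blocksWithin (fun k hk => ?_) ?_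
  · have hk : k + 2 < 99 := hk
    have h₀ := start_succ_symbolWord S m as (k := k) (by omega)
    have h₁ := start_succ_symbolWord S m as (k := k + 1) (by omega)
    rw [show k + 1 + 1 = k + 2 from rfl] at h₁
    omega
  · have hfirst := start_succ_symbolWord S m as (k := 0) (by omega)
    have h₉₇ := start_succ_symbolWord S m as (k := 97) (by omega)
    have h₉₈ := start_succ_symbolWord S m as (k := 98) (by omega)
    have hstem := length_symbolStem_le S m as
    norm_num only [BlockWord.start_zero] at hfirst h₉₇ h₉₈
    rw [period_symbolWord, show (symbolWord S m as).last - 2 = 97 from rfl]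
    omega

end SymbolWord

/-! ### The relators of `G(𝒜)` -/

section Separated

variable {S : IndexedStructure} {q q' m m' : ℕ} {x y x' y' : GenSym S.A}

theorem separated_chainWord (q : ℕ) (x y : GenSym S.A) (q' : ℕ) (x' y' : GenSym S.A) :
    (chainWord q x y).Separated (chainWord q' x' y') where
  length_stemAt_le k _ _ := by rw [stemAt_chainWord, List.length_singleton]
  of_exponent_eq hy k k' hk hk' he := by
    have hk : k + 1 < 999 := hk
    obtain ⟨rfl, rfl⟩ := eq_of_exponent_chainWord_eq (by omega) hk' he
    obtain rfl : y = y' := hy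
    exact ⟨rfl, show k < 999 by omega, rfl, fun hx => by rw [List.singleton_inj.1 hx]⟩
  exponent_ne_add _ h := absurd h (List.cons_ne_nil _ _)

theorem separated_chainWord_symbolWord (h : ChainTriple q x y) (as : Fin (S.arity m) → S.A) :
    (chainWord q x y).Separated (symbolWord S m as) where
  length_stemAt_le _ _ hmem :=
    have ⟨a, ha⟩ := exists_eq_elt_of_mem_stemAt_symbolWord hmem
    absurd ha (h.right_ne_elt a)
  of_exponent_eq hy := absurd hy h.right_ne_b
  exponent_ne_add hy := absurd hy h.right_ne_b

theorem separated_symbolWord_chainWord (as : Fin (S.arity m) → S.A) (h : ChainTriple q x y) :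
    (symbolWord S m as).Separated (chainWord q x y) where
  length_stemAt_le k _ _ := by rw [stemAt_chainWord, List.length_singleton]
  of_exponent_eq hy := absurd hy.symm h.right_ne_b
  exponent_ne_add hy := absurd hy.symm h.right_ne_b

theorem separated_symbolWord (as : Fin (S.arity m) → S.A) (as' : Fin (S.arity m') → S.A) :
    (symbolWord S m as).Separated (symbolWord S m' as') where
  length_stemAt_le _ _ hmem := nomatch exists_eq_elt_of_mem_stemAt_symbolWord hmem
  of_exponent_eq _ k k' hk hk' he := by
    have hk : k + 1 < 99 := hk
    have hk' : k' ≤ 99 := hk'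
    rw [exponent_symbolWord, exponent_symbolWord] at he
    obtain ⟨rfl, rfl⟩ : m = m' ∧ k = k' := by split_ifs at he <;> omega
    exact ⟨rfl, show k < 99 by omega, (length_argWord as).trans (length_argWord as').symm,
      fun has => by rw [argWord_injective has]⟩
  exponent_ne_add _ _ k hk := by
    have hk : k + 1 < 99 := hk
    change _ ≠ (symbolWord S m' as').exponent 98 + (symbolWord S m' as').exponent 99
    rw [exponent_symbolWord, exponent_symbolWord, exponent_symbolWord, if_pos (by omega),
      if_pos (by norm_num), if_neg (lt_irrefl 99)]
    omega

end Separated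

/-- The cyclic words of the relators of `G(𝒜)` that are not powers of a generator. The words of all
tuples of arguments of a relation symbol are included, whether or not the relation holds. -/
inductive RelatorWord (S : IndexedStructure) : BlockWord (GenSym S.A) → Prop
  | chain {q : ℕ} {x y : GenSym S.A} (h : ChainTriple q x y) : RelatorWord S (chainWord q x y)
  | symbol {m : ℕ} (hm : 1 ≤ m) (as : Fin (S.arity m) → S.A) : RelatorWord S (symbolWord S m as)

namespace RelatorWord

variable {S : IndexedStructure} {D D' : BlockWord (GenSym S.A)} {i j d : ℤ}

theorem wellFormed (hD : RelatorWord S D) : D.WellFormed := by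
  cases hD with
  | chain h => exact wellFormed_chainWord h.right_ne_left
  | symbol hm as => exact wellFormed_symbolWord as hm

theorem separated (hD : RelatorWord S D) (hD' : RelatorWord S D') : D.Separated D' := by
  cases hD with
  | chain h =>
    cases hD' with
    | chain h' => exact separated_chainWord _ _ _ _ _ _
    | symbol _ as' => exact separated_chainWord_symbolWord h as'
  | symbol _ as =>
    cases hD' with
    | chain h' => exact separated_symbolWord_chainWord as h'
    | symbol _ as' => exact separated_symbolWord as as'

theorem exists_blockWithin (hD : RelatorWord S D) (hij : D.period ≤ 20 * (j - i)) :
    ∃ k q, D.BlockWithin i j k q := by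
  cases hD with
  | @chain q x y h =>
    have hperiod := le_period_chainWord q x y
    exact blocksWithin_chainWord h.right_ne_left i j (by linarith)
  | @symbol m hm as =>
    have hperiod := le_period_symbolWord as hm
    exact blocksWithin_symbolWord as hm i j (by linarith)

theorem eq_of_overlap (hD : RelatorWord S D) (hD' : RelatorWord S D')
    (hag : ∀ t, i ≤ t → t < j → D.seq t = D'.seq (t + d)) (hij : D.period ≤ 20 * (j - i)) :
    (∀ t, D.seq t = D'.seq (t + d)) ∧ D.period = D'.period := by
  obtain ⟨k, q, hb⟩ := hD.exists_blockWithin hij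
  obtain ⟨rfl, hseq⟩ :=
    (hD.separated hD').eq_of_forall_eq hD.wellFormed hD'.wellFormed hb hag
  exact ⟨hseq, rfl⟩

theorem not_forall_eq (hD : RelatorWord S D) (hij : D.period ≤ 20 * (j - i))
    (z : GenSym S.A × Bool) : ¬ ∀ t, i ≤ t → t < j → D.seq t = z := by
  obtain ⟨k, q, hb⟩ := hD.exists_blockWithin hij
  exact hb.not_forall_eq hD.wellFormed z

end RelatorWord

theorem fst_seq_symbolWord {S : IndexedStructure} {m : ℕ} (hm : 1 ≤ m)
    (as : Fin (S.arity m) → S.A) (t : ℤ) :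
    ((symbolWord S m as).seq t).1 = .b ∨ ∃ a, ((symbolWord S m as).seq t).1 = .elt a := by
  obtain ⟨k, q, hk, h₁, h₂⟩ :=
    (symbolWord S m as).exists_start_le_lt (wellFormed_symbolWord as hm).period_pos t
  rcases lt_or_ge t ((symbolWord S m as).start k + ((symbolWord S m as).stemAt k).length +
    q * (symbolWord S m as).period) with h | h
  · exact .inr (exists_eq_elt_of_mem_stemAt_symbolWord (BlockWord.seq_mem_stemAt _ hk h₁ h))
  · exact .inl (congrArg Prod.fst (BlockWord.seq_eq_pivot _ hk h h₂))

theorem RelatorWord.not_forall_eq_f {S : IndexedStructure} {D : BlockWord (GenSym S.A)}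
    (hD : RelatorWord S D) {i j : ℤ} (hij : 10 ^ 10 ≤ 20 * (j - i)) {z : GenSym S.A}
    (hz : z = .f1 ∨ z = .f2) : ¬ ∀ t, i ≤ t → t < j → D.seq t = (z, true) := by
  cases hD with
  | @chain q x y h =>
    have hq : (q : ℤ) ≤ 4 := Int.ofNat_le.2 h.le_four
    have hlen : (4 * (1 + (1000 * q + 1000) ^ 2 : ℕ) + 1 : ℤ) ≤ j - i := by
      push_cast
      nlinarith
    obtain ⟨k, p, hb⟩ := blocksWithin_chainWord h.right_ne_left i j hlen
    exact hb.not_forall_eq (wellFormed_chainWord h.right_ne_left) _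
  | symbol hm as =>
    intro hag
    have hletter := fst_seq_symbolWord hm as i
    rw [hag i le_rfl (by omega)] at hletter
    rcases hz with rfl | rfl <;> simp at hletter

/-- The bi-infinite words of the relators of `G(𝒜)`, with their periods. -/
inductive RelatorBase (S : IndexedStructure) (p₁ p₂ : ℕ) : (ℤ → GenSym S.A × Bool) → ℤ → Prop
  | word {D : BlockWord (GenSym S.A)} (hD : RelatorWord S D) : RelatorBase S p₁ p₂ D.seq D.period
  | f1 : RelatorBase S p₁ p₂ (fun _ => (.f1, true)) p₁
  | f2 : RelatorBase S p₁ p₂ (fun _ => (.f2, true)) p₂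

namespace RelatorBase

variable {S : IndexedStructure} {p₁ p₂ : ℕ}

theorem eq_of_overlap {β β' : ℤ → GenSym S.A × Bool} {π π' i j d : ℤ} (hp₁ : 10 ^ 10 < p₁)
    (hp₂ : 10 ^ 10 < p₂) (hβ : RelatorBase S p₁ p₂ β π) (hβ' : RelatorBase S p₁ p₂ β' π')
    (hag : ∀ t, i ≤ t → t < j → β t = β' (t + d)) (hij : π ≤ 20 * (j - i)) :
    (∀ t, β t = β' (t + d)) ∧ π = π' := by
  have shifted (z) (hz : ∀ t, i ≤ t → t < j → z = β' (t + d)) (t) (h₁ : i + d ≤ t)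
      (h₂ : t < j + d) : β' t = z := by
    rw [hz (t - d) (by omega) (by omega), sub_add_cancel]
  cases hβ with
  | word hD =>
    cases hβ' with
    | word hD' => exact hD.eq_of_overlap hD' hag hij
    | f1 | f2 => exact absurd hag (hD.not_forall_eq hij _)
  | f1 =>
    cases hβ' with
    | word hD' => exact absurd (shifted _ hag) (hD'.not_forall_eq_f (by omega) (.inl rfl))
    | f1 => exact ⟨fun _ => rfl, rfl⟩
    | f2 => exact nomatch hag i le_rfl (by omega)
  | f2 =>
    cases hβ' with
    | word hD' => exact absurd (shifted _ hag) (hD'.not_forall_eq_f (by omega) (.inr rfl))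
    | f1 => exact nomatch hag i le_rfl (by omega)
    | f2 => exact ⟨fun _ => rfl, rfl⟩

theorem isBase (S : IndexedStructure) (hp₁ : 10 ^ 10 < p₁) (hp₂ : 10 ^ 10 < p₂) :
    IsBase (RelatorBase S p₁ p₂) where
  periodic
    | .word _ => BlockWord.periodic_seq _
    | .f1 | .f2 => fun _ => rfl
  succ_ne_letterInv
    | .word hD => hD.wellFormed.seq_succ_ne_letterInv
    | .f1 | .f2 => fun _ => by simp [letterInv]
  hundred_le
    | .word hD => hD.wellFormed.hundred_le_period
    | .f1 | .f2 => by omega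
  add_lt_of_negative
    | .word hD, ht, ht', hlt => hD.wellFormed.add_lt_of_negative ht ht' hlt
  eq_of_overlap hβ hβ' hag hij := eq_of_overlap hp₁ hp₂ hβ hβ' hag hij

end RelatorBase

/-! ### The presentation of `G(𝒜)` -/

/-- `r` is conjugate to one period of a bi-infinite word of `RelatorBase`. -/
def IsConjOfBase (S : IndexedStructure) (p₁ p₂ : ℕ) (r : FreeGroup (GenSym S.A)) : Prop :=
  ∃ g ρ π, RelatorBase S p₁ p₂ ρ π ∧ r = g * pathProd ρ 0 π * g⁻¹

variable {S : IndexedStructure} (p₁ p₂ : ℕ)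

theorem of_pow_eq_pathProd (z : α) (p : ℕ) :
    FreeGroup.of z ^ p = pathProd (fun _ => (z, true)) 0 p := by
  have h := pathProd_add_natCast (fun _ => (z, true)) 0 p
  rw [zero_add] at h
  rw [h, subword, List.map_const', List.length_range, mk_replicate]

theorem ChainTriple.isConjOfBase {q : ℕ} {x y : GenSym S.A} (h : ChainTriple q x y) :
    IsConjOfBase S p₁ p₂ (chainProd (1000 * q) (of x) (of y)) := by
  obtain ⟨g, hg⟩ := BlockWord.exists_prod_mul_eq_conj_pathProd y [x] 999
    (fun k => (1000 * q + k + 1) ^ 2) (x := of x) (v := positiveWord [x]) rfl (one_mul _).symm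
  rw [mul_one, show 999 + 1 = 1000 from rfl] at hg
  exact ⟨g, _, _, .word (.chain h), hg⟩

theorem isConjOfBase_wProd_mul_symbolTail {m : ℕ} (hm : 1 ≤ m) (as : Fin (S.arity m) → S.A) :
    IsConjOfBase S p₁ p₂
      (wProd m (fun i => of (GenSym.elt (as i))) (of GenSym.b) * symbolTail S m as) := by
  have hargs : mk (positiveWord (argWord as)) =
      (List.ofFn fun i => of (GenSym.elt (as i))).prod := by
    rw [mk_positiveWord, argWord, List.map_ofFn]
    rfl
  have hstem : mk (symbolStem S m as) = symbolTail S m as *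
      (List.ofFn fun i => of (GenSym.elt (as i))).prod := by
    classical exact FreeGroup.mk_toWord.trans (congrArg _ hargs)
  obtain ⟨g, hg⟩ := BlockWord.exists_prod_mul_eq_conj_pathProd GenSym.b (argWord as) 99
    (fun k => 100 * m + k + 1) hargs hstem
  rw [show 99 + 1 = 100 from rfl] at hg
  exact ⟨g, _, _, .word (.symbol hm as), hg⟩

theorem isConjOfBase_of_mem_grpRels {r : FreeGroup (GenSym S.A)} (hr : r ∈ grpRels S p₁ p₂) :
    IsConjOfBase S p₁ p₂ r := by
  obtain ((hr | ⟨a, hr⟩) | ⟨m, hm, hf, as, hr⟩) | ⟨m, hm, hf, as, -, hr⟩ := hr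
  · rcases hr with hr | hr | hr | hr | hr | hr | hr | hr | hr | (hr : r = _) <;> rw [hr]
    · exact ⟨1, _, _, .f1, by rw [of_pow_eq_pathProd, one_mul, inv_one, mul_one]⟩
    · exact ⟨1, _, _, .f2, by rw [of_pow_eq_pathProd, one_mul, inv_one, mul_one]⟩
    · exact ChainTriple.f1_f2.isConjOfBase p₁ p₂
    · exact ChainTriple.f2_f1.isConjOfBase p₁ p₂
    · exact ChainTriple.b_f1.isConjOfBase p₁ p₂
    · exact ChainTriple.b_f2.isConjOfBase p₁ p₂
    · exact ChainTriple.c_f1.isConjOfBase p₁ p₂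
    · exact ChainTriple.c_f2.isConjOfBase p₁ p₂
    · exact ChainTriple.d_f1.isConjOfBase p₁ p₂
    · exact ChainTriple.d_f2.isConjOfBase p₁ p₂
  · rcases hr with hr | hr <;> rw [hr]
    · exact (ChainTriple.elt_c a).isConjOfBase p₁ p₂
    · exact (ChainTriple.elt_d a).isConjOfBase p₁ p₂
  · have h := isConjOfBase_wProd_mul_symbolTail p₁ p₂ hm as
    rwa [symbolTail, if_pos hf, ← hr] at h
  · have h := isConjOfBase_wProd_mul_symbolTail p₁ p₂ hm as
    rwa [symbolTail, if_neg hf, mul_one, ← hr] at h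

variable {p₁ p₂}

theorem gen_injective (hp₁ : 10 ^ 10 < p₁) (hp₂ : 10 ^ 10 < p₂) :
    Function.Injective (gen S p₁ p₂) := by
  refine injective_presentedGroup_of (RelatorBase.isBase S hp₁ hp₂).isSmallCancellation
    fun r hr => ?_
  obtain ⟨g, ρ, π, hρ, hr⟩ := isConjOfBase_of_mem_grpRels p₁ p₂ hr
  exact ⟨g, ρ, π, .of_base hρ, hr⟩

theorem map_wProd {G H : Type*} [Group G] [Group H] (φ : G →* H) (m : ℕ) {n : ℕ} (xs : Fin n → G)
    (y : G) : φ (wProd m xs y) = wProd m (fun i => φ (xs i)) (φ y) := by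
  simp only [wProd, map_list_prod, List.map_map, Function.comp_def, _root_.map_mul, map_pow,
    List.map_ofFn]

theorem wProd_gen_eq (p₁ p₂ : ℕ) {m : ℕ} (hm : 1 ≤ m) (hfun : S.isFunc m)
    (as : Fin (S.arity m) → S.A) :
    wProd m (fun i => gen S p₁ p₂ (.elt (as i))) (gen S p₁ p₂ .b) =
      gen S p₁ p₂ (.elt (S.funcInterp m as)) := by
  have hrel : wProd m (fun i => of (GenSym.elt (as i))) (of .b) *
      (of (GenSym.elt (S.funcInterp m as)))⁻¹ ∈ grpRels S p₁ p₂ :=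
    Or.inl (Or.inr ⟨m, hm, hfun, as, rfl⟩)
  have hone := PresentedGroup.mk_eq_one_iff.2 (Subgroup.subset_normalClosure hrel)
  rwa [_root_.map_mul, _root_.map_inv, mul_inv_eq_one, map_wProd] at hone

end SmallCancellation

theorem stmt_3_general (S : IndexedStructure) (p₁ p₂ : ℕ)
    (hbig₁ : 10 ^ 10 < p₁) (hbig₂ : 10 ^ 10 < p₂)
    (m : ℕ) (hm : 1 ≤ m) (hfun : S.isFunc m)
    (as : Fin (S.arity m) → S.A) (a' : S.A)
    (h : wProd m (fun i => gen S p₁ p₂ (GenSym.elt (as i))) (gen S p₁ p₂ GenSym.b) =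
      gen S p₁ p₂ (GenSym.elt a')) :
    S.funcInterp m as = a' :=
  GenSym.elt.inj (SmallCancellation.gen_injective hbig₁ hbig₂
    ((SmallCancellation.wProd_gen_eq p₁ p₂ hm hfun as).symm.trans h))

/-- Lemma `lem:functor-works`(1): if the `m`-th symbol of `L` is a function
symbol `f` of arity `n`, and `a₁,…,aₙ, a' ∈ A` are such that `w_m(a₁,…,aₙ,b) = a'` holds in
`G(𝒜)`, then `f^𝒜(a₁,…,aₙ) = a'` in `𝒜`. -/
theorem stmt_3 (S : IndexedStructure) (p₁ p₂ : ℕ)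
    (hp₁ : p₁.Prime) (hp₂ : p₂.Prime) (hne : p₁ ≠ p₂)
    (hbig₁ : 10 ^ 10 < p₁) (hbig₂ : 10 ^ 10 < p₂)
    (m : ℕ) (hm : 1 ≤ m) (hfun : S.isFunc m)
    (as : Fin (S.arity m) → S.A) (a' : S.A)
    (h : wProd m (fun i => gen S p₁ p₂ (GenSym.elt (as i))) (gen S p₁ p₂ GenSym.b) =
      gen S p₁ p₂ (GenSym.elt a')) :
    S.funcInterp m as = a' :=
  stmt_3_general S p₁ p₂ hbig₁ hbig₂ m hm hfun as a' h
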